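/- arXiv:math/0401242 — 3 statements merged into one kernel-verified Lean document; each statement's English description precedes it below -/
import Mathlib

section
/- Let A = C(X) ⊗ K ≅ C(X, K) where X is a compact Hausdorff space of covering dimension d, and let e, f be projections in M_n(C(X)) such that rank(e(x)) ≥ rank(f(x)) + d + 1 for every x ∈ X. Then f is Murray–von Neumann subequivalent to e in M_n(C(X)): there exists v with v*v = f and vv* ≤ e. -/
open scoped ENNReal MultiplierAlgebra Matrix

/-- An element `b` of a topological ring is *full* if the closure of the two-sided ideal
it generates is the whole ring. -/
def IsFullIn {A : Type*} [NonUnitalNonAssocRing A] [TopologicalSpace A] (b : A) : Prop :=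
  closure ((TwoSidedIdeal.span {b} : TwoSidedIdeal A) : Set A) = Set.univ

/-- Property (P1): every full element `b` admits `x, y` with `x * b * y = 1`. -/
def PropP1 (B : Type*) [Ring B] [TopologicalSpace B] : Prop :=
  ∀ b : B, IsFullIn b → ∃ x y : B, x * b * y = 1

/-- The piecewise-linear function `f_n` : `0` on `[0, 1/(n+1)]`, `1` on `[1/n, ∞)`,
linear in between. -/
noncomputable def fcut (n : ℕ) (t : ℝ) : ℝ := min 1 (max 0 ((n * (n + 1) : ℝ) * t - n))
/-- Covering dimension at most `d`: every open cover admits an open refinement (indexed by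
the same set) of order at most `d + 1`. -/
def CoveringDimLE (X : Type*) [TopologicalSpace X] (d : ℕ) : Prop :=
  ∀ (ι : Type) (U : ι → Set X), (∀ i, IsOpen (U i)) → (⋃ i, U i) = Set.univ →
    ∃ V : ι → Set X, (∀ i, IsOpen (V i)) ∧ (∀ i, V i ⊆ U i) ∧ (⋃ i, V i) = Set.univ ∧
      ∀ x : X, {i | x ∈ V i}.Finite ∧ {i | x ∈ V i}.ncard ≤ d + 1

/-!
For continuous `g`, the matrix `e g f` maps the range of `f` into the range of `e`. If it is
injective there, then `v = e g f T^(-1/2)` is the required partial isometry, where `T` is the Gram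
matrix of `e g f` completed by the identity on the kernel of `f`.

Such `g` are dense by general position. Where `e` and `f` are trivial, of ranks `r` and `m`, the
perturbation is a map `h` into the `r × m` matrices, which a partition of unity of order `d + 1`
turns into `∑ ρ_j A_j` with at most `d + 1` nonzero terms at each point. Up to scaling, such a
combination together with a kernel vector has `d + κ (m - 1)` real parameters, with
`κ = [𝕜 : ℝ]`, while vanishing of the product is `κ r` real equations; so for
`d + κ m < κ (r + 1)` the bad tuples `A` have too small a Hausdorff dimension to contain an open
set. Over a compact set the condition on `g` is also open, so the local statements can be combined
over a finite cover.
-/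

open Module Topology

section Transversality

theorem dimH_setOf_exists_eq_zero_le {P F Y : Type*} [NormedAddCommGroup P] [NormedSpace ℝ P]
    [FiniteDimensional ℝ P] [NormedAddCommGroup F] [NormedSpace ℝ F] [FiniteDimensional ℝ F]
    [NormedAddCommGroup Y] [NormedSpace ℝ Y] [FiniteDimensional ℝ Y] {Φ : P × F → Y}
    (hΦ : ContDiff ℝ 1 Φ) (R : Y →ₗ[ℝ] F) (hR : ∀ p A y, Φ (p, A + R y) = Φ (p, A) + y) :
    dimH {A | ∃ p, Φ (p, A) = 0} ≤ (finrank ℝ P + (finrank ℝ F - finrank ℝ Y) : ℕ) := by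
  obtain ⟨H, hH⟩ := R.range.exists_isCompl
  have hR_inj : Function.Injective R := (injective_iff_map_eq_zero R).2 fun y hy ↦ by
    simpa [hy] using hR 0 0 y
  have hfinrank : finrank ℝ H = finrank ℝ F - finrank ℝ Y := by
    rw [← Submodule.finrank_add_eq_of_isCompl hH, LinearMap.finrank_range_of_inj hR_inj,
      Nat.add_sub_cancel_left]
  -- By `hR`, the `R`-component of a bad `A` is determined by `p` and its component in `H`.
  let Ψ (q : P × H) : F := q.2 - R.toContinuousLinearMap (Φ (q.1, q.2))
  have hΨ : ContDiff ℝ 1 Ψ := by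
    have hH : ContDiff ℝ 1 (Subtype.val : H → F) := H.subtypeL.contDiff
    fun_prop
  have hsub : {A | ∃ p, Φ (p, A) = 0} ⊆ Set.range Ψ := by
    rintro A ⟨p, hA⟩
    obtain ⟨_, ⟨y, rfl⟩, b, hb, rfl⟩ := Submodule.mem_sup.1
      (hH.sup_eq_top ▸ Submodule.mem_top (x := A))
    have hy : y = -Φ (p, b) := by
      rw [add_comm, hR] at hA
      exact eq_neg_of_add_eq_zero_right hA
    exact ⟨(p, ⟨b, hb⟩), by simp [Ψ, hy, sub_eq_neg_add]⟩
  calc dimH {A | ∃ p, Φ (p, A) = 0} ≤ dimH (Set.range Ψ) := dimH_mono hsub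
    _ ≤ finrank ℝ (P × H) := hΨ.dimH_range_le
    _ = _ := by rw [finrank_prod, hfinrank]

theorem dense_compl_iUnion_of_dimH_lt_finrank {E : Type*} [NormedAddCommGroup E] [NormedSpace ℝ E]
    [FiniteDimensional ℝ E] {κ : Type*} [Finite κ] {s : κ → Set E}
    (hs : ∀ t, dimH (s t) < finrank ℝ E) : Dense (⋃ t, s t)ᶜ := by
  rcases isEmpty_or_nonempty κ with _ | _
  · simp
  · refine dense_compl_of_dimH_lt_finrank ?_
    obtain ⟨t, ht⟩ := exists_eq_ciSup_of_finite (f := fun t ↦ dimH (s t))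
    rw [dimH_iUnion, ← ht]
    exact hs t

end Transversality

section LinearCombinations

open scoped Matrix.Norms.Elementwise

variable {𝕜 : Type*} [RCLike 𝕜] {ι r m : Type*} [Fintype r] [Fintype m] {d : ℕ}

theorem finrank_ker_proj_add_finrank (k : m) :
    finrank ℝ (LinearMap.ker (LinearMap.proj k : (m → 𝕜) →ₗ[ℝ] 𝕜)) + finrank ℝ 𝕜
      = finrank ℝ 𝕜 * Fintype.card m := by
  classical
  have h := LinearMap.finrank_range_add_finrank_ker (LinearMap.proj k : (m → 𝕜) →ₗ[ℝ] 𝕜)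
  rw [LinearMap.range_eq_top.2 (LinearMap.proj_surjective k), finrank_top, finrank_pi_fintype,
    Finset.sum_const, Finset.card_univ, smul_eq_mul] at h
  linarith

theorem contDiff_add_sum_smul_mulVec [Fintype ι] (S : Finset ι) (i : ι) :
    ContDiff ℝ 1 fun q : ((S → ℝ) × (m → 𝕜)) × (ι → Matrix r m 𝕜) ↦
      (q.2 i + ∑ j, q.1.1 j • q.2 j) *ᵥ q.1.2 := by
  let E := ((S → ℝ) × (m → 𝕜)) × (ι → Matrix r m 𝕜)
  have : Module.Finite ℝ (ι → Matrix r m 𝕜) := inferInstanceAs (Module.Finite ℝ (ι → r → m → 𝕜))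
  have hA (j : ι) (a : r) (b : m) : ContDiff ℝ 1 fun q : E ↦ q.2 j a b :=
    (Matrix.entryLinearMap ℝ 𝕜 a b ∘ₗ
      (LinearMap.proj j : (ι → Matrix r m 𝕜) →ₗ[ℝ] _)).toContinuousLinearMap.contDiff.comp
      contDiff_snd
  have hc (j : S) : ContDiff ℝ 1 fun q : E ↦ q.1.1 j := by fun_prop
  have hw (b : m) : ContDiff ℝ 1 fun q : E ↦ q.1.2 b := by fun_prop
  exact contDiff_pi.2 fun a ↦ ContDiff.sum fun b _ ↦ by
    simpa [Matrix.sum_apply] using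
      ((hA i a b).add (ContDiff.sum fun j _ ↦ (hc j).smul (hA j a b))).mul (hw b)

theorem dimH_setOf_add_sum_mulVec_eq_zero_lt [Fintype ι] (hd : d + finrank ℝ 𝕜 * Fintype.card m
    < finrank ℝ 𝕜 * (Fintype.card r + 1)) {S : Finset ι} (hS : S.card ≤ d) {i : ι} (hi : i ∉ S)
    (k : m) :
    dimH {A : ι → Matrix r m 𝕜 | ∃ c : S → ℝ, ∃ w : m → 𝕜, w k = 1 ∧
      (A i + ∑ j, c j • A j) *ᵥ w = 0} < finrank ℝ (ι → Matrix r m 𝕜) := by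
  classical
  have : Module.Finite ℝ (ι → Matrix r m 𝕜) := inferInstanceAs (Module.Finite ℝ (ι → r → m → 𝕜))
  let H := LinearMap.ker (LinearMap.proj k : (m → 𝕜) →ₗ[ℝ] 𝕜)
  let Φ (q : ((S → ℝ) × H) × (ι → Matrix r m 𝕜)) : r → 𝕜 :=
    (q.2 i + ∑ j, q.1.1 j • q.2 j) *ᵥ ((q.1.2 : m → 𝕜) + Pi.single k 1)
  have hΦ : ContDiff ℝ 1 Φ := by
    have hH : ContDiff ℝ 1 (Subtype.val : H → m → 𝕜) := H.subtypeL.contDiff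
    exact (contDiff_add_sum_smul_mulVec S i).comp (g := fun q ↦ _)
      (f := fun q : ((S → ℝ) × H) × (ι → Matrix r m 𝕜) ↦
        ((q.1.1, (q.1.2 : m → 𝕜) + Pi.single k 1), q.2)) (by fun_prop)
  let R : (r → 𝕜) →ₗ[ℝ] ι → Matrix r m 𝕜 :=
    LinearMap.single ℝ _ i ∘ₗ (vecMulVecBilin ℝ ℝ).flip (Pi.single k 1)
  have hR (p : (S → ℝ) × H) A y : Φ (p, A + R y) = Φ (p, A) + y := by
    have hRi : R y i = Matrix.vecMulVec y (Pi.single k 1) := by simp [R]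
    have hRS (j : S) : R y j = 0 := by simp [R, ne_of_mem_of_not_mem j.2 hi]
    have hk : (p.2 : m → 𝕜) k = 0 := p.2.2
    simp only [Φ, Pi.add_apply, hRi, hRS, add_zero, add_right_comm _ (Matrix.vecMulVec _ _)]
    rw [Matrix.add_mulVec _ (Matrix.vecMulVec _ _), Matrix.vecMulVec_mulVec]
    simp [hk]
  have hP : finrank ℝ ((S → ℝ) × H) < finrank ℝ (r → 𝕜) := by
    simp only [finrank_prod, finrank_pi, finrank_pi_fintype, Fintype.card_coe, Finset.sum_const,
      Finset.card_univ, smul_eq_mul]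
    linarith [finrank_ker_proj_add_finrank (𝕜 := 𝕜) k]
  have hY : finrank ℝ (r → 𝕜) ≤ finrank ℝ (ι → Matrix r m 𝕜) :=
    LinearMap.finrank_le_finrank_of_injective (f := R)
      ((injective_iff_map_eq_zero R).2 fun y hy ↦ by simpa [hy] using hR 0 0 y)
  refine (dimH_mono ?_).trans_lt <| (dimH_setOf_exists_eq_zero_le hΦ R hR).trans_lt <|
    Nat.cast_lt.2 (by omega)
  exact fun A ⟨c, w, hw, hA⟩ ↦ ⟨(c, ⟨w - Pi.single k 1, by simp [H, hw]⟩), by simpa [Φ] using hA⟩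

theorem dense_setOf_forall_sum_smul_mulVec_injective [Fintype ι]
    (hd : d + finrank ℝ 𝕜 * Fintype.card m < finrank ℝ 𝕜 * (Fintype.card r + 1)) :
    Dense {A : ι → Matrix r m 𝕜 | ∀ c : ι → ℝ, c ≠ 0 → c.support.ncard ≤ d + 1 →
      Function.Injective (∑ j, c j • A j).mulVec} := by
  classical
  have : Module.Finite ℝ (ι → Matrix r m 𝕜) := inferInstanceAs (Module.Finite ℝ (ι → r → m → 𝕜))
  -- Scaling a coefficient and an entry of a kernel vector to `1` leaves `d` free real coefficients.
  let T := {t : Finset ι × ι × m // t.1.card ≤ d ∧ t.2.1 ∉ t.1}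
  let B (t : T) := {A : ι → Matrix r m 𝕜 | ∃ c : t.1.1 → ℝ, ∃ w : m → 𝕜, w t.1.2.2 = 1 ∧
    (A t.1.2.1 + ∑ j, c j • A j) *ᵥ w = 0}
  have hB : Dense (⋃ t, B t)ᶜ := dense_compl_iUnion_of_dimH_lt_finrank fun t ↦
    dimH_setOf_add_sum_mulVec_eq_zero_lt hd t.2.1 t.2.2 _
  refine hB.mono fun A hA c hc hcard ↦
    (injective_iff_map_eq_zero (∑ j, c j • A j).mulVecLin).2 fun w hw ↦ ?_
  by_contra hw0
  obtain ⟨k, hk⟩ := Function.ne_iff.1 hw0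
  obtain ⟨i, hi⟩ := Function.ne_iff.1 hc
  let s := c.support.toFinset
  have his : i ∈ s := by simpa [s] using hi
  have hs : (s.erase i).card + 1 ≤ d + 1 := by
    rwa [Finset.card_erase_add_one his, ← Set.ncard_eq_toFinset_card']
  have hsum : A i + ∑ j : s.erase i, ((c i)⁻¹ * c j) • A j = (c i)⁻¹ • ∑ j, c j • A j := by
    rw [Finset.sum_coe_sort (s.erase i) fun j ↦ ((c i)⁻¹ * c j) • A j, Finset.smul_sum,
      ← Finset.sum_subset s.subset_univ (by simp +contextual [s]), ← Finset.add_sum_erase s _ his,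
      inv_smul_smul₀ hi]
    simp only [smul_smul]
  refine hA (Set.mem_iUnion.2 ⟨⟨(s.erase i, i, k), Nat.le_of_succ_le_succ hs, by simp⟩,
    fun j ↦ (c i)⁻¹ * c j, (w k)⁻¹ • w, inv_mul_cancel₀ hk, ?_⟩)
  rw [hsum, Matrix.smul_mulVec, Matrix.mulVec_smul]
  exact (congr_arg _ (congr_arg _ hw)).trans (by simp)

end LinearCombinations

theorem CoveringDimLE.exists_partitionOfUnity {X : Type*} [TopologicalSpace X] [CompactSpace X]
    [NormalSpace X] {d : ℕ} (hdim : CoveringDimLE X d) {U : X → Set X} (hU : ∀ x, U x ∈ 𝓝 x) :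
    ∃ (k : ℕ) (y : Fin k → X) (ρ : PartitionOfUnity (Fin k) X),
      (∀ j x, ρ j x ≠ 0 → x ∈ U (y j)) ∧ ∀ x, {j | ρ j x ≠ 0}.ncard ≤ d + 1 := by
  obtain ⟨t, ht⟩ := CompactSpace.elim_nhds_subcover (fun x ↦ interior (U x))
    fun x ↦ interior_mem_nhds.2 (hU x)
  let y (j : Fin t.card) : X := t.equivFin.symm j
  have hy : ⋃ j, interior (U (y j)) = Set.univ := by
    rw [t.equivFin.symm.surjective.iUnion_comp fun x : t ↦ interior (U x), ← Set.top_eq_univ, ← ht,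
      Set.iUnion_subtype]
  obtain ⟨V, hV_open, hVU, hV_cover, hV⟩ := hdim _ _ (fun _ ↦ isOpen_interior) hy
  obtain ⟨ρ, hρ⟩ := PartitionOfUnity.exists_isSubordinate isClosed_univ V hV_open
    hV_cover.ge
  have hρV {j x} (h : ρ j x ≠ 0) : x ∈ V j := hρ j (subset_tsupport _ h)
  exact ⟨t.card, y, ρ, fun j x h ↦ interior_subset (hVU j (hρV h)), fun x ↦
    (Set.ncard_le_ncard (t := {j | x ∈ V j}) (fun _ ↦ hρV) (hV x).1).trans (hV x).2⟩

theorem CoveringDimLE.dense_setOf_forall_mem {X : Type*} [TopologicalSpace X] [CompactSpace X]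
    [NormalSpace X] {d : ℕ} (hdim : CoveringDimLE X d) {E : Type*} [NormedAddCommGroup E]
    [NormedSpace ℝ E] {N : Set E} (hN : ∀ k, Dense {A : Fin k → E | ∀ c : Fin k → ℝ, c ≠ 0 →
      c.support.ncard ≤ d + 1 → ∑ j, c j • A j ∈ N}) :
    Dense {h : C(X, E) | ∀ x, h x ∈ N} := by
  refine Metric.dense_iff.2 fun h ε hε ↦ ?_
  obtain ⟨k, y, ρ, hρ, hcard⟩ := hdim.exists_partitionOfUnity
    (U := fun x ↦ h ⁻¹' Metric.ball (h x) (ε / 2))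
    fun x ↦ h.continuous.continuousAt (Metric.ball_mem_nhds _ (half_pos hε))
  obtain ⟨A, hAh, hA⟩ := Metric.dense_iff.1 (hN k) (fun j ↦ h (y j)) (ε / 2) (half_pos hε)
  have hρ_sum (x : X) : ∑ j, ρ j x = 1 := by
    rw [← finsum_eq_sum_of_fintype, ρ.sum_eq_one (Set.mem_univ x)]
  refine ⟨⟨fun x ↦ ∑ j, ρ j x • A j, by fun_prop⟩, ?_, fun x ↦ hA (fun j ↦ ρ j x) ?_ (hcard x)⟩
  · refine (ContinuousMap.dist_lt_iff hε).2 fun x ↦ ?_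
    change ∑ j, ρ j x • A j ∈ Metric.ball (h x) ε
    rw [← finsum_eq_sum_of_fintype]
    refine ρ.finsum_smul_mem_convex (g := fun j _ ↦ A j) (Set.mem_univ x) (fun j hj ↦ ?_)
      (convex_ball (h x) ε)
    calc dist (A j) (h x) ≤ dist (A j) (h (y j)) + dist (h x) (h (y j)) := dist_triangle_right _ _ _
      _ < ε / 2 + ε / 2 := add_lt_add ((dist_le_pi_dist A _ j).trans_lt hAh) (hρ j x hj)
      _ = ε := add_halves ε
  · intro h0
    simpa [congr_fun h0] using hρ_sum x

open scoped Matrix.Norms.Elementwise in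
theorem CoveringDimLE.dense_setOf_forall_mulVec_injective {X : Type*} [TopologicalSpace X]
    [CompactSpace X] [NormalSpace X] {d : ℕ} (hdim : CoveringDimLE X d) {𝕜 : Type*} [RCLike 𝕜]
    {r m : Type*} [Fintype r] [Fintype m]
    (hd : d + finrank ℝ 𝕜 * Fintype.card m < finrank ℝ 𝕜 * (Fintype.card r + 1)) :
    Dense {h : C(X, Matrix r m 𝕜) | ∀ x, Function.Injective (h x).mulVec} :=
  hdim.dense_setOf_forall_mem (N := {A : Matrix r m 𝕜 | Function.Injective A.mulVec}) fun _ ↦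
    dense_setOf_forall_sum_smul_mulVec_injective hd

section RangeGram

variable {R : Type*} [Ring R] [StarRing R] {f w s : R}

/-- The Gram element of the restriction of `w` to the range of the projection `f`, extended by the
identity on the range of `1 - f`, so that it is invertible as soon as `w` is injective on the range
of `f`. -/
def rangeGram (f w : R) : R := star (w * f) * (w * f) + star (1 - f) * (1 - f)

theorem isSelfAdjoint_rangeGram (f w : R) : IsSelfAdjoint (rangeGram f w) :=
  (IsSelfAdjoint.star_mul_self _).add (IsSelfAdjoint.star_mul_self _)

theorem rangeGram_mul_self (hf : IsIdempotentElem f) :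
    rangeGram f w * f = star (w * f) * (w * f) := by
  rw [rangeGram, add_mul, mul_assoc, mul_assoc, mul_assoc, hf.eq, hf.one_sub_mul_self, mul_zero,
    add_zero]

theorem commute_rangeGram_self (hf : IsStarProjection f) : Commute (rangeGram f w) f :=
  calc rangeGram f w * f = star (rangeGram f w * f) := by
        rw [rangeGram_mul_self hf.isIdempotentElem, (IsSelfAdjoint.star_mul_self _).star_eq]
    _ = f * rangeGram f w := by
        rw [star_mul, hf.isSelfAdjoint.star_eq, (isSelfAdjoint_rangeGram f w).star_eq]

theorem star_mul_self_of_mul_rangeGram_mul (hf : IsIdempotentElem f) (hs : IsSelfAdjoint s)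
    (hsf : Commute s f) (h : s * rangeGram f w * s = 1) :
    star (w * f * s) * (w * f * s) = f := by
  calc star (w * f * s) * (w * f * s) = s * (star (w * f) * (w * f)) * s := by
        rw [star_mul (w * f), hs.star_eq]; simp only [mul_assoc]
    _ = s * rangeGram f w * s * f := by
        rw [← rangeGram_mul_self hf]; simp only [mul_assoc, hsf.eq]
    _ = f := by rw [h, one_mul]

end RangeGram

section InvSqrt

theorem continuousOn_inv_sqrt_Ioi : ContinuousOn (fun t : ℝ ↦ (√t)⁻¹) (Set.Ioi 0) :=
  Real.continuous_sqrt.continuousOn.inv₀ fun _ ht ↦ (Real.sqrt_pos.2 ht).ne'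

theorem cfc_inv_sqrt_mul_mul_cfc_inv_sqrt {A : Type*} [TopologicalSpace A] [Ring A] [StarRing A]
    [Algebra ℝ A] [ContinuousFunctionalCalculus ℝ A IsSelfAdjoint] {a : A} (ha : IsSelfAdjoint a)
    (ha_pos : spectrum ℝ a ⊆ Set.Ioi 0) :
    cfc (fun t : ℝ ↦ (√t)⁻¹) a * a * cfc (fun t : ℝ ↦ (√t)⁻¹) a = 1 := by
  have hcont := continuousOn_inv_sqrt_Ioi.mono ha_pos
  calc cfc (fun t : ℝ ↦ (√t)⁻¹) a * a * cfc (fun t : ℝ ↦ (√t)⁻¹) a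
      = cfc (fun t : ℝ ↦ (√t)⁻¹ * t * (√t)⁻¹) a := by
        rw [cfc_mul (fun t ↦ (√t)⁻¹ * t) _ a (hcont.mul continuousOn_id) hcont,
          cfc_mul _ (fun t ↦ t) a hcont continuousOn_id, cfc_id' ℝ a]
    _ = cfc (fun _ ↦ 1) a := cfc_congr fun t ht ↦ by
        have : √t ≠ 0 := (Real.sqrt_pos.2 (ha_pos ht)).ne'
        field_simp
        exact (Real.sq_sqrt (ha_pos ht).le).symm
    _ = 1 := cfc_const_one ℝ a

variable {𝕜 : Type*} [RCLike 𝕜] {X n : Type*} [TopologicalSpace X] [Fintype n] [DecidableEq n]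

open scoped ComplexOrder Matrix.Norms.L2Operator MatrixOrder in
theorem exists_isSelfAdjoint_mul_mul_eq_one {T : C(X, Matrix n n 𝕜)} (hT : ∀ x, (T x).PosDef) :
    ∃ S : C(X, Matrix n n 𝕜), IsSelfAdjoint S ∧ S * T * S = 1 ∧ ∀ a, Commute T a → Commute S a := by
  let _ : NormedAlgebra ℝ (Matrix n n 𝕜) :=
    { (inferInstance : Algebra ℝ (Matrix n n 𝕜)) with
      norm_smul_le r a := by
        rw [← algebraMap_smul 𝕜 r a]
        exact (norm_smul_le _ _).trans_eq (by simp) }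
  have hsa (x : X) : IsSelfAdjoint (T x) := (hT x).1
  have hspec (x : X) : spectrum ℝ (T x) ⊆ Set.Ioi 0 :=
    fun _ ↦ (hT x).isStrictlyPositive.spectrum_pos
  refine ⟨⟨fun x ↦ cfc (fun t : ℝ ↦ (√t)⁻¹) (T x), ?_⟩, ContinuousMap.ext fun x ↦ ?_,
    ContinuousMap.ext fun x ↦ ?_, fun a ha ↦ ContinuousMap.ext fun x ↦ ?_⟩
  · exact T.continuous.cfc_of_mem_nhdsSet _ (isOpen_Ioi.mem_nhdsSet.2 (Set.iUnion_subset hspec))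
      hsa continuousOn_inv_sqrt_Ioi
  · exact cfc_predicate (p := IsSelfAdjoint) (fun t : ℝ ↦ (√t)⁻¹) (T x)
  · exact cfc_inv_sqrt_mul_mul_cfc_inv_sqrt (hsa x) (hspec x)
  · exact Commute.cfc_real (DFunLike.congr_fun ha.eq x) _

end InvSqrt

section Positivity

variable {𝕜 : Type*} [RCLike 𝕜] {X n : Type*} [TopologicalSpace X] [Fintype n] [DecidableEq n]

open scoped ComplexOrder

theorem posDef_rangeGram {f w : Matrix n n 𝕜} (h : ∀ u, w *ᵥ (f *ᵥ u) = 0 → f *ᵥ u = 0) :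
    (rangeGram f w).PosDef := by
  rw [rangeGram, Matrix.star_eq_conjTranspose, Matrix.star_eq_conjTranspose,
    ← Matrix.fromCols_mul_fromRows, ← Matrix.conjTranspose_fromRows_eq_fromCols_conjTranspose]
  refine Matrix.PosDef.conjTranspose_mul_self _ ?_
  refine (injective_iff_map_eq_zero (Matrix.fromRows (w * f) (1 - f)).mulVecLin).2 fun u hu ↦ ?_
  rw [Matrix.mulVecLin_apply, Matrix.fromRows_mulVec] at hu
  have hwf : (w * f) *ᵥ u = 0 := funext fun i ↦ congr_fun hu (Sum.inl i)
  have h1f : (1 - f) *ᵥ u = 0 := funext fun i ↦ congr_fun hu (Sum.inr i)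
  rw [Matrix.sub_mulVec, Matrix.one_mulVec, sub_eq_zero] at h1f
  rw [h1f, h u (by rwa [Matrix.mulVec_mulVec])]

theorem posDef_rangeGram_iff_det_ne_zero {f w : Matrix n n 𝕜} :
    (rangeGram f w).PosDef ↔ (rangeGram f w).det ≠ 0 :=
  ((Matrix.posSemidef_conjTranspose_mul_self _).add
    (Matrix.posSemidef_conjTranspose_mul_self _)).posDef_iff_det_ne_zero

theorem isOpen_setOf_forall_posDef_rangeGram [LocallyCompactSpace X] {K : Set X} (hK : IsCompact K)
    (e f : C(X, Matrix n n 𝕜)) :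
    IsOpen {g : C(X, Matrix n n 𝕜) | ∀ x ∈ K, (rangeGram f (e * g) x).PosDef} := by
  have : ContinuousStar C(X, Matrix n n 𝕜) :=
    ⟨ContinuousMap.continuous_postcomp ⟨star, continuous_star⟩⟩
  have hcont : Continuous fun g : C(X, Matrix n n 𝕜) ↦ rangeGram f (e * g) := by
    unfold rangeGram; fun_prop
  have hO : IsOpen {T : Matrix n n 𝕜 | T.det ≠ 0} :=
    isOpen_ne.preimage continuous_id.matrix_det
  convert (ContinuousMap.isOpen_setOfPred_mapsTo hK hO).preimage hcont using 1
  ext g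
  exact forall₂_congr fun x _ ↦ posDef_rangeGram_iff_det_ne_zero

end Positivity

section LocalFrames

theorem exists_rank_factorization_of_isIdempotentElem {K n : Type*} [Field K] [Fintype n]
    {p : Matrix n n K} (hp : IsIdempotentElem p) :
    ∃ (a : Matrix n (Fin p.rank) K) (b : Matrix (Fin p.rank) n K), b * a = 1 ∧ a * b = p := by
  classical
  let R := LinearMap.range p.mulVecLin
  let φ : R ≃ₗ[K] Fin p.rank → K := (finBasisOfFinrankEq K R rfl).equivFun
  let a := R.subtype ∘ₗ φ.symm.toLinearMap
  let b := φ.toLinearMap ∘ₗ p.mulVecLin.rangeRestrict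
  have hR (y : R) : p.mulVecLin.rangeRestrict y = y := by
    obtain ⟨_, u, rfl⟩ := y
    exact Subtype.ext (by simp [hp.eq])
  have hba : b ∘ₗ a = LinearMap.id := LinearMap.ext fun v ↦ by simp [a, b, hR]
  have hab : a ∘ₗ b = p.mulVecLin := LinearMap.ext fun v ↦ by simp [a, b]
  refine ⟨LinearMap.toMatrix' a, LinearMap.toMatrix' b, ?_, ?_⟩
  · rw [← LinearMap.toMatrix'_comp, hba, LinearMap.toMatrix'_id]
  · rw [← LinearMap.toMatrix'_comp, hab]
    exact LinearMap.toMatrix'_toLin' p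

variable {𝕜 : Type*} [RCLike 𝕜] {X : Type*} [TopologicalSpace X] {x₀ : X}

theorem exists_eventually_mul_eq_one {φ : C(X, 𝕜)} (h : φ x₀ ≠ 0) :
    ∃ ψ : C(X, 𝕜), ∀ᶠ x in 𝓝 x₀, ψ x * φ x = 1 := by
  have hpos : 0 < ‖φ x₀‖ ^ 2 := by positivity
  let m (x : X) : ℝ := max (‖φ x‖ ^ 2) (‖φ x₀‖ ^ 2 / 2)
  have hm_pos (x : X) : (m x : 𝕜) ≠ 0 :=
    RCLike.ofReal_ne_zero.2 (lt_max_of_lt_right (half_pos hpos)).ne'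
  have hm : Continuous fun x ↦ (m x : 𝕜) := by fun_prop
  refine ⟨⟨fun x ↦ star (φ x) / m x, φ.continuous.star.div hm hm_pos⟩, ?_⟩
  have hnear : ∀ᶠ x in 𝓝 x₀, ‖φ x₀‖ ^ 2 / 2 < ‖φ x‖ ^ 2 :=
    (φ.continuous.norm.pow 2).continuousAt.eventually_const_lt (half_lt_self hpos)
  filter_upwards [hnear] with x hx
  have hmx : (m x : 𝕜) = star (φ x) * φ x := by
    rw [RCLike.star_def, RCLike.conj_mul, ← RCLike.ofReal_pow]
    exact congr_arg _ (max_eq_left hx.le)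
  simp only [ContinuousMap.coe_mk]
  rw [div_mul_eq_mul_div, ← hmx, div_self (hm_pos x)]

variable {n : Type*} [Fintype n]

theorem exists_eventually_matrix_mul_eq_one [DecidableEq n] {Y : C(X, Matrix n n 𝕜)}
    (h : (Y x₀).det ≠ 0) :
    ∃ J : C(X, Matrix n n 𝕜), ∀ᶠ x in 𝓝 x₀, J x * Y x = 1 := by
  obtain ⟨ψ, hψ⟩ := exists_eventually_mul_eq_one (φ := ⟨fun x ↦ (Y x).det, by fun_prop⟩) h
  refine ⟨⟨fun x ↦ ψ x • (Y x).adjugate, ψ.continuous.smul Y.continuous.matrix_adjugate⟩,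
    hψ.mono fun x hx ↦ ?_⟩
  rw [ContinuousMap.coe_mk, smul_mul_assoc, Matrix.adjugate_mul, smul_smul]
  exact (congr_arg (· • 1) hx).trans (one_smul 𝕜 1)

theorem exists_eventually_frame {p : C(X, Matrix n n 𝕜)} (hp : IsIdempotentElem p) (x₀ : X) :
    ∃ (a : C(X, Matrix n (Fin (p x₀).rank) 𝕜)) (b : C(X, Matrix (Fin (p x₀).rank) n 𝕜)),
      ∀ᶠ x in 𝓝 x₀, b x * a x = 1 ∧ a x * b x = p x := by
  classical
  have hpx (x : X) : IsIdempotentElem (p x) := DFunLike.congr_fun hp x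
  obtain ⟨a₀, b₀, hba, hab⟩ := exists_rank_factorization_of_isIdempotentElem (hpx x₀)
  let Y : C(X, Matrix n n 𝕜) := ⟨fun x ↦ p x * p x₀ + (1 - p x) * (1 - p x₀), by fun_prop⟩
  have hpY (x : X) : p x * Y x = Y x * p x₀ := by
    simp only [Y, ContinuousMap.coe_mk, mul_add, add_mul, ← mul_assoc, (hpx x).eq,
      (hpx x).mul_one_sub_self, zero_mul, add_zero]
    simp only [mul_assoc, (hpx x₀).eq, (hpx x₀).one_sub_mul_self, mul_zero, add_zero]
  have hY₀ : Y x₀ = 1 := by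
    simp [Y, (hpx x₀).eq, (hpx x₀).one_sub.eq]
  obtain ⟨J, hJ⟩ := exists_eventually_matrix_mul_eq_one (Y := Y) (x₀ := x₀) (by simp [hY₀])
  refine ⟨⟨fun x ↦ Y x * a₀, by fun_prop⟩, ⟨fun x ↦ b₀ * J x, by fun_prop⟩,
    hJ.mono fun x hx ↦ ⟨?_, ?_⟩⟩
  · calc b₀ * J x * (Y x * a₀) = b₀ * (J x * Y x) * a₀ := by simp only [Matrix.mul_assoc]
      _ = 1 := by rw [hx, Matrix.mul_one, hba]
  · calc Y x * a₀ * (b₀ * J x) = Y x * (a₀ * b₀) * J x := by simp only [Matrix.mul_assoc]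
      _ = p x * (Y x * J x) := by rw [hab, ← hpY, Matrix.mul_assoc]
      _ = p x := by rw [mul_eq_one_comm.1 hx, mul_one]

end LocalFrames

section Density

open scoped ComplexOrder

variable {𝕜 : Type*} [RCLike 𝕜] {X n : Type*} [TopologicalSpace X] [CompactSpace X] [T2Space X]
  [Fintype n] [DecidableEq n] {d : ℕ} {e f : C(X, Matrix n n 𝕜)}

theorem dense_setOf_forall_posDef_rangeGram_of_frames {r m : Type*} [Fintype r] [Fintype m]
    [DecidableEq r] [DecidableEq m] (hdim : CoveringDimLE X d)
    (hd : d + finrank ℝ 𝕜 * Fintype.card m < finrank ℝ 𝕜 * (Fintype.card r + 1))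
    {a : C(X, Matrix n r 𝕜)} {b : C(X, Matrix r n 𝕜)} {a' : C(X, Matrix n m 𝕜)}
    {b' : C(X, Matrix m n 𝕜)} {K : Set X} (he : ∀ x ∈ K, b x * a x = 1 ∧ a x * b x = e x)
    (hf : ∀ x ∈ K, b' x * a' x = 1 ∧ a' x * b' x = f x) :
    Dense {g : C(X, Matrix n n 𝕜) | ∀ x ∈ K, (rangeGram f (e * g) x).PosDef} := by
  intro g
  -- Over `K`, the matrix of `Ψ h` in the given frames is `h`; that of `g` is `h₀`.
  let h₀ : C(X, Matrix r m 𝕜) := ⟨fun x ↦ b x * g x * a' x, by fun_prop⟩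
  let Ψ (h : C(X, Matrix r m 𝕜)) : C(X, Matrix n n 𝕜) :=
    ⟨fun x ↦ g x + a x * (h x - h₀ x) * b' x, by fun_prop⟩
  have hΨ : Continuous Ψ := ContinuousMap.continuous_of_continuous_uncurry _ <| by
    simp only [Ψ, Function.uncurry_def, ContinuousMap.coe_mk]
    fun_prop
  have hΨ_frame (h) {x} (hx : x ∈ K) : b x * Ψ h x * a' x = h x :=
    calc b x * Ψ h x * a' x = b x * g x * a' x + b x * a x * (h x - h₀ x) * (b' x * a' x) := by
          simp only [Ψ, ContinuousMap.coe_mk, Matrix.mul_add, Matrix.add_mul, Matrix.mul_assoc]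
      _ = h₀ x + (h x - h₀ x) := by
          rw [(he x hx).1, (hf x hx).1, Matrix.one_mul, Matrix.mul_one]; rfl
      _ = h x := add_sub_cancel _ _
  have hg : Ψ h₀ = g := by ext1 x; simp [Ψ]
  rw [← hg]
  refine map_mem_closure hΨ (hdim.dense_setOf_forall_mulVec_injective hd h₀)
    fun h hh x hx ↦ posDef_rangeGram fun u hu ↦ ?_
  have hhu : h x *ᵥ (b' x *ᵥ u) = 0 :=
    calc h x *ᵥ (b' x *ᵥ u) = b x *ᵥ (e * Ψ h) x *ᵥ f x *ᵥ u := by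
          rw [← hΨ_frame h hx, ContinuousMap.mul_apply, ← (he x hx).2, ← (hf x hx).2]
          simp only [Matrix.mulVec_mulVec, ← Matrix.mul_assoc, (he x hx).1, Matrix.one_mul]
      _ = 0 := by rw [hu, Matrix.mulVec_zero]
  have hbu : b' x *ᵥ u = 0 := hh x (hhu.trans (Matrix.mulVec_zero _).symm)
  rw [← (hf x hx).2, ← Matrix.mulVec_mulVec, hbu, Matrix.mulVec_zero]

theorem exists_mem_nhds_dense_setOf_forall_posDef_rangeGram (hdim : CoveringDimLE X d)
    (he : IsIdempotentElem e) (hf : IsIdempotentElem f) {x₀ : X}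
    (hrank : d + finrank ℝ 𝕜 * (f x₀).rank < finrank ℝ 𝕜 * ((e x₀).rank + 1)) :
    ∃ K ∈ 𝓝 x₀, IsClosed K ∧
      Dense {g : C(X, Matrix n n 𝕜) | ∀ x ∈ K, (rangeGram f (e * g) x).PosDef} := by
  obtain ⟨a, b, hab⟩ := exists_eventually_frame he x₀
  obtain ⟨a', b', hab'⟩ := exists_eventually_frame hf x₀
  obtain ⟨K, hK, hK_closed, hKab⟩ := exists_mem_nhds_isClosed_subset (hab.and hab')
  exact ⟨K, hK, hK_closed, dense_setOf_forall_posDef_rangeGram_of_frames hdim (by simpa using hrank)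
    (fun x hx ↦ (hKab hx).1) fun x hx ↦ (hKab hx).2⟩

theorem dense_setOf_forall_posDef_rangeGram (hdim : CoveringDimLE X d) (he : IsIdempotentElem e)
    (hf : IsIdempotentElem f)
    (hrank : ∀ x, d + finrank ℝ 𝕜 * (f x).rank < finrank ℝ 𝕜 * ((e x).rank + 1)) :
    Dense {g : C(X, Matrix n n 𝕜) | ∀ x, (rangeGram f (e * g) x).PosDef} := by
  choose K hK hK_closed hK_dense using fun x ↦
    exists_mem_nhds_dense_setOf_forall_posDef_rangeGram hdim he hf (hrank x)
  obtain ⟨t, ht⟩ := CompactSpace.elim_nhds_subcover K hK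
  let O (y : X) := {g : C(X, Matrix n n 𝕜) | ∀ x ∈ K y, (rangeGram f (e * g) x).PosDef}
  have hO (y : X) : IsOpen (O y) :=
    isOpen_setOf_forall_posDef_rangeGram (hK_closed y).isCompact e f
  have hO_dense : Dense (⋂₀ (O '' t)) := (t.finite_toSet.image O).dense_sInter
    (Set.forall_mem_image.2 fun y _ ↦ hO y) (Set.forall_mem_image.2 fun y _ ↦ hK_dense y)
  refine hO_dense.mono fun g hg x ↦ ?_
  obtain ⟨y, hy, hxy⟩ := Set.mem_iUnion₂.1 (ht.ge (Set.mem_univ x))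
  exact hg (O y) (Set.mem_image_of_mem O hy) x hxy

end Density

theorem stmt14_general {𝕜 : Type*} [RCLike 𝕜] {X n : Type*} [TopologicalSpace X] [CompactSpace X]
    [T2Space X] [Fintype n] {d : ℕ} (hdim : CoveringDimLE X d) {e f : C(X, Matrix n n 𝕜)}
    (he : IsIdempotentElem e) (hf : IsStarProjection f)
    (hrank : ∀ x, d + finrank ℝ 𝕜 * (f x).rank < finrank ℝ 𝕜 * ((e x).rank + 1)) :
    ∃ v, star v * v = f ∧ e * v = v := by
  classical
  obtain ⟨g, hg⟩ :=
    (dense_setOf_forall_posDef_rangeGram hdim he hf.isIdempotentElem hrank).nonempty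
  obtain ⟨s, hs, hs_inv, hs_comm⟩ := exists_isSelfAdjoint_mul_mul_eq_one hg
  exact ⟨e * g * f * s, star_mul_self_of_mul_rangeGram_mul hf.isIdempotentElem hs
    (hs_comm f (commute_rangeGram_self hf)) hs_inv, by simp only [← mul_assoc, he.eq]⟩

/-- if `X` is compact Hausdorff of covering dimension `d` and `e, f` are
projections in `M_n(C(X))` with `rank e(x) ≥ rank f(x) + d + 1` everywhere, then `f ≲ e`:
there is `v` with `v* v = f` and `v v* ≤ e`. -/
theorem stmt14 {X : Type} [TopologicalSpace X] [CompactSpace X] [T2Space X]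
    (d n : ℕ) (hdim : CoveringDimLE X d)
    (e f : C(X, Matrix (Fin n) (Fin n) ℂ))
    (he : ∀ x, e x * e x = e x ∧ (e x)ᴴ = e x)
    (hf : ∀ x, f x * f x = f x ∧ (f x)ᴴ = f x)
    (hrank : ∀ x, (f x).rank + d + 1 ≤ (e x).rank) :
    ∃ v : C(X, Matrix (Fin n) (Fin n) ℂ),
      (∀ x, (v x)ᴴ * v x = f x) ∧
      (∀ x, e x * (v x * (v x)ᴴ) = v x * (v x)ᴴ) := by
  obtain ⟨v, hv, hev⟩ := stmt14_general hdim (e := e) (f := f)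
    (ContinuousMap.ext fun x ↦ (he x).1)
    ⟨ContinuousMap.ext fun x ↦ (hf x).1, ContinuousMap.ext fun x ↦ (hf x).2⟩
    fun x ↦ by rw [Complex.finrank_real_complex]; linarith [hrank x]
  exact ⟨v, DFunLike.congr_fun hv, fun x ↦ by
    rw [← mul_assoc]; exact congr_arg (· * (v x)ᴴ) (DFunLike.congr_fun hev x)⟩
end

section
/- Let B = A ⊗ K where A is a unital purely infinite simple C*-algebra. Then both the multiplier algebra M(B) and the corona algebra M(B)/B have property (P1): every full element b admits x, y with x b y = 1. -/
open scoped ENNReal MultiplierAlgebra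

/-! Let `T` be a multiplier outside `B`, with matrix units `e i j` and diagonal projections
`p n = e 0 0 + ⋯ + e (n - 1) (n - 1)`. Since `T` is not a norm limit of the `T * p n ∈ B`, there is
`δ > 0` such that arbitrarily far out there are blocks `q = p m - p n` with `‖T * q‖ > δ`. Within
each block pure infiniteness gives a column `z` of norm at most `δ⁻¹` with
`star z * (star T * T) * z = e 0 0`. Taking the blocks far enough out makes the cross terms of
successive columns summably small, so `y = ∑ z k * e 0 k` converges strictly and
`star y * (star T * T) * y` is within `1 / 2` of `1`, hence invertible. A full element does not lie
in `B`, which gives (P1) for the multiplier algebra, and a nonzero element of the corona lifts to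
such a `T`. -/

open Filter Finset Topology

section Full

variable {A A' : Type*} [Ring A] [TopologicalSpace A] [Ring A'] [TopologicalSpace A'] [T1Space A']

lemma IsFullIn.map_eq_zero {b : A} (hb : IsFullIn b) {f : A →+* A'} (hf : Continuous f)
    (hfb : f b = 0) (a : A) : f a = 0 := by
  have hspan : TwoSidedIdeal.span {b} ≤ TwoSidedIdeal.ker f :=
    TwoSidedIdeal.span_le.2 (by simpa [TwoSidedIdeal.mem_ker] using hfb)
  have hsub : ((TwoSidedIdeal.span {b} : TwoSidedIdeal A) : Set A) ⊆ f ⁻¹' {0} :=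
    fun x hx ↦ (TwoSidedIdeal.mem_ker f).1 (hspan hx)
  have ha : a ∈ closure ((TwoSidedIdeal.span {b} : TwoSidedIdeal A) : Set A) :=
    hb.symm ▸ Set.mem_univ a
  exact closure_minimal hsub (isClosed_singleton.preimage hf) ha

lemma propP1_of_forall_map_ne_zero [Nontrivial A'] {f : A →+* A'} (hf : Continuous f)
    (h : ∀ a, f a ≠ 0 → ∃ x y, x * a * y = 1) : PropP1 A := fun b hb ↦
  h b fun hfb ↦ one_ne_zero ((map_one f).symm.trans (hb.map_eq_zero hf hfb 1))

end Full

section Compression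

lemma norm_star_add_mul_mul_add_sub_add_le {R : Type*} [NonUnitalNormedRing R]
    [StarRing R] [NormedStarGroup R] {S y w p : R} (hS : IsSelfAdjoint S) :
    ‖star (y + w) * S * (y + w) - (p + star w * S * w)‖ ≤
      ‖star y * S * y - p‖ + 2 * ‖star y * S * w‖ := by
  have hswap : star w * S * y = star (star y * S * w) := by
    simp only [star_mul, star_star, hS.star_eq, mul_assoc]
  calc _ = ‖(star y * S * y - p) + star y * S * w + star w * S * y‖ := by
        rw [star_add]; congr 1; noncomm_ring
    _ ≤ ‖star y * S * y - p‖ + ‖star y * S * w‖ + ‖star w * S * y‖ := norm_add₃_le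
    _ = _ := by rw [hswap, norm_star]; ring

lemma smul_star_mul_self_mul_right_le {R : Type*} [NonUnitalRing R] [PartialOrder R] [StarRing R]
    [StarOrderedRing R] [Module ℝ R] [IsScalarTower ℝ R R] [SMulCommClass ℝ R R] {c b : R} {d : ℝ}
    (h : d • (star c * c) ≤ b) (y : R) : d • (star (c * y) * (c * y)) ≤ star y * b * y := by
  refine le_of_eq_of_le ?_ (star_left_conjugate_le_conjugate h y)
  simp only [star_mul, mul_smul_comm, smul_mul_assoc, mul_assoc]

variable {M : Type*} [CStarAlgebra M] [PartialOrder M] [StarOrderedRing M]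

-- `s = p (h + (1 - p)) ^ (-1/2)`, the inverse square root of `h` in the corner `p M p`.
lemma exists_conjugate_eq_of_le_smul {h p : M} (hp : IsStarProjection p) (hh : 0 ≤ h)
    (hhp : h * p = h) {K : ℝ} (hK : p ≤ K • h) : ∃ s, star s * h * s = p := by
  have hpp : p * p = p := hp.isIdempotentElem
  have hpstar : star p = p := hp.isSelfAdjoint
  have hph : p * h = h := by
    rw [← hh.isSelfAdjoint.star_eq, ← hpstar, ← star_mul, hhp]
  set g := h + (1 - p) with g_def
  have hle : 1 ≤ max K 1 • g := calc
    1 = p + (1 - p) := by abel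
    _ ≤ max K 1 • h + max K 1 • (1 - p) := by
      refine add_le_add (hK.trans ?_) ?_
      · exact smul_le_smul_of_nonneg_right (le_max_left K 1) hh
      · exact le_smul_of_one_le_left hp.one_sub_nonneg (le_max_right K 1)
    _ = max K 1 • g := (smul_add _ _ _).symm
  have hg : IsStrictlyPositive g := by
    have hK0 : (0 : ℝ) < max K 1 := lt_max_of_lt_right one_pos
    have := (IsStrictlyPositive.of_le isStrictlyPositive_one hle).smul (inv_pos.2 hK0)
    rwa [inv_smul_smul₀ hK0.ne'] at this
  set r := g ^ (-(1 / 2) : ℝ) with r_def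
  have hr : star r = r := (IsSelfAdjoint.of_nonneg CFC.rpow_nonneg).star_eq
  have hrp : r * p = p * r := by
    have hgp : Commute g p := by
      simp only [Commute, SemiconjBy, g_def, add_mul, mul_add, hph, hhp, sub_mul, mul_sub,
        one_mul, mul_one]
    rw [r_def, CFC.rpow_def]
    exact hgp.cfc_nnreal _
  have hpgp : p * g * p = h := by
    simp only [g_def, mul_add, mul_sub, mul_one, hph, hhp, hpp, sub_self, add_zero]
  refine ⟨r * p, ?_⟩
  calc star (r * p) * h * (r * p) = p * (r * p) * g * (p * r) * p := by
        rw [star_mul, hr, hpstar, ← hpgp]; noncomm_ring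
    _ = p * (p * r) * g * (r * p) * p := by rw [hrp]
    _ = (p * p) * (r * g * r) * (p * p) := by noncomm_ring
    _ = p := by rw [CFC.conjugate_rpow_neg_one_half g hg, hpp, mul_one, hpp]

-- `v = (a - d)₊`
lemma exists_mul_ne_zero_smul_star_mul_self_le {a : M} (ha : 0 ≤ a) {d : ℝ} (hd : 0 ≤ d)
    (hda : d < ‖a‖) :
    ∃ v, a * v ≠ 0 ∧ d • (star (a * v) * (a * v)) ≤ star (a * v) * a * (a * v) := by
  have : Nontrivial M := ⟨a, 0, norm_pos_iff.1 (hd.trans_lt hda)⟩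
  set v := cfc (fun t : ℝ ↦ max 0 (t - d)) a
  have hav : a * v = cfc (fun t : ℝ ↦ t * max 0 (t - d)) a := by
    rw [cfc_mul (fun t : ℝ ↦ t) (fun t : ℝ ↦ max 0 (t - d)) a, cfc_id' ℝ a]
  refine ⟨v, fun hav0 ↦ ?_, ?_⟩
  · have hspec : ‖a‖ * max 0 (‖a‖ - d) ∈ spectrum ℝ (a * v) := by
      rw [hav, cfc_map_spectrum (R := ℝ) _ a]
      exact ⟨‖a‖, CStarAlgebra.norm_mem_spectrum_of_nonneg ha, rfl⟩
    rw [hav0, spectrum.zero_eq, Set.mem_singleton_iff, max_eq_right (by linarith)] at hspec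
    exact (mul_pos (hd.trans_lt hda) (sub_pos.2 hda)).ne' hspec
  · have hstar : star (a * v) = a * v := by
      rw [hav]; exact (cfc_predicate (R := ℝ) _ a).star_eq
    rw [hstar, hav]
    nth_rw 4 [← cfc_id' ℝ a]
    rw [← cfc_mul .., ← cfc_mul .., ← cfc_mul .., ← cfc_smul ..]
    refine cfc_mono fun t _ ↦ ?_
    simp only [smul_eq_mul]
    rcases le_total t d with h | h
    · simp [max_eq_left (sub_nonpos.2 h)]
    · nlinarith [mul_nonneg (sub_nonneg.2 h) (sq_nonneg (t * max 0 (t - d)))]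

lemma exists_conjugate_eq_of_lt_norm {a p : M} (ha : 0 ≤ a) (hp : IsStarProjection p) {d : ℝ}
    (hd : 0 < d) (hda : d < ‖a‖) (hfull : ∀ v, a * v ≠ 0 → ∃ x y, x * (a * v) * y = p) :
    ∃ w, star (a * w) * a * (a * w) = p ∧ d • (star (a * w) * (a * w)) ≤ p := by
  have hpp : p * p = p := hp.isIdempotentElem
  obtain ⟨v, hv0, hv⟩ := exists_mul_ne_zero_smul_star_mul_self_le ha hd.le hda
  obtain ⟨x, y, hxy⟩ := hfull v hv0
  set u := a * v * (y * p) with u_def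
  have hup : u * p = u := by simp only [u_def, mul_assoc, hpp]
  have hxu : x * u = p := by rw [u_def, ← mul_assoc, ← mul_assoc, hxy, hpp]
  have hu : d • (star u * u) ≤ star u * a * u := by
    refine (smul_star_mul_self_mul_right_le hv (y * p)).trans_eq ?_
    simp only [u_def, star_mul, mul_assoc]
  have hpu : p ≤ (‖x‖ ^ 2) • (star u * u) := calc
    p = star u * (star x * x) * u := by
      rw [← hp.isIdempotentElem.eq]
      nth_rw 1 [← hp.isSelfAdjoint.star_eq]
      rw [← hxu, star_mul]
      simp only [mul_assoc]
    _ ≤ star u * algebraMap ℝ M (‖x‖ ^ 2) * u :=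
      star_left_conjugate_le_conjugate CStarAlgebra.star_mul_le_algebraMap_norm_sq u
    _ = (‖x‖ ^ 2) • (star u * u) := by simp [Algebra.algebraMap_eq_smul_one]
  have hK : p ≤ (‖x‖ ^ 2 / d) • (star u * a * u) := calc
    p ≤ (‖x‖ ^ 2 / d) • d • (star u * u) := by rwa [smul_smul, div_mul_cancel₀ _ hd.ne']
    _ ≤ _ := smul_le_smul_of_nonneg_left hu (by positivity)
  obtain ⟨s, hs⟩ := exists_conjugate_eq_of_le_smul hp (star_left_conjugate_nonneg ha u)
    (by rw [mul_assoc, hup]) hK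
  have haw : a * (v * (y * p) * s) = u * s := by simp only [u_def, mul_assoc]
  refine ⟨v * (y * p) * s, ?_, ?_⟩ <;> rw [haw]
  · rw [← hs, star_mul]
    simp only [mul_assoc]
  · exact (smul_star_mul_self_mul_right_le hu s).trans_eq hs

lemma norm_le_inv_of_sq_smul_star_mul_self_le_one {y : M} {δ : ℝ} (hδ : 0 < δ)
    (h : δ ^ 2 • (star y * y) ≤ 1) : ‖y‖ ≤ δ⁻¹ := by
  have hnorm : (δ * ‖y‖) ^ 2 ≤ 1 := calc
    (δ * ‖y‖) ^ 2 = ‖δ ^ 2 • (star y * y)‖ := by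
      rw [norm_smul, CStarRing.norm_star_mul_self, Real.norm_of_nonneg (sq_nonneg δ)]
      ring
    _ ≤ 1 := CStarAlgebra.norm_le_one_iff_of_nonneg _
      (smul_nonneg (sq_nonneg δ) (star_mul_self_nonneg y)) |>.2 h
  rw [← one_div, le_div_iff₀' hδ]
  exact (sq_le_one_iff₀ (by positivity)).1 hnorm

end Compression

/-- A system of matrix units indexed by `ι`: `e i j` plays the role of the matrix with a single
nonzero entry `1` in position `(i, j)`. -/
structure IsMatrixUnits {ι R : Type*} [DecidableEq ι] [Mul R] [Zero R] [Star R]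
    (e : ι → ι → R) : Prop where
  star_eq : ∀ i j, star (e i j) = e j i
  mul_eq : ∀ i j k l, e i j * e k l = if j = k then e i l else 0

/-- The sum of the diagonal matrix units `e i i` over `i ∈ s`, a projection. -/
def diagSum {ι R : Type*} [AddCommMonoid R] (e : ι → ι → R) (s : Finset ι) : R :=
  ∑ i ∈ s, e i i

namespace IsMatrixUnits

section NonUnitalRing

variable {ι R : Type*} [DecidableEq ι] [NonUnitalRing R] [StarRing R] {e : ι → ι → R}

lemma map {S : Type*} [NonUnitalRing S] [StarRing S] {F : Type*} [FunLike F R S]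
    [NonUnitalRingHomClass F R S] [StarHomClass F R S] (he : IsMatrixUnits e) (f : F) :
    IsMatrixUnits fun i j ↦ f (e i j) where
  star_eq i j := by rw [← map_star, he.star_eq]
  mul_eq i j k l := by rw [← map_mul, he.mul_eq]; split_ifs <;> simp

lemma diagSum_mul_unit (he : IsMatrixUnits e) (s : Finset ι) (k l : ι) :
    diagSum e s * e k l = if k ∈ s then e k l else 0 := by
  simp [diagSum, sum_mul, he.mul_eq]

lemma unit_mul_diagSum (he : IsMatrixUnits e) (k l : ι) (s : Finset ι) :
    e k l * diagSum e s = if l ∈ s then e k l else 0 := by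
  simp [diagSum, mul_sum, he.mul_eq]

lemma diagSum_mul_diagSum (he : IsMatrixUnits e) (s t : Finset ι) :
    diagSum e s * diagSum e t = diagSum e (s ∩ t) := by
  rw [diagSum.eq_1 e t, mul_sum]
  simp_rw [he.diagSum_mul_unit]
  rw [sum_ite_mem, inter_comm, diagSum]

lemma isStarProjection_diagSum (he : IsMatrixUnits e) (s : Finset ι) :
    IsStarProjection (diagSum e s) where
  isIdempotentElem := by rw [IsIdempotentElem, he.diagSum_mul_diagSum, inter_self]
  isSelfAdjoint := by simp [IsSelfAdjoint, diagSum, he.star_eq]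

lemma isStarProjection_unit (he : IsMatrixUnits e) (i : ι) : IsStarProjection (e i i) := by
  simpa [diagSum] using he.isStarProjection_diagSum {i}

end NonUnitalRing

lemma norm_unit_le_one {ι M : Type*} [DecidableEq ι] [NonUnitalNormedRing M] [StarRing M]
    [CStarRing M] {e : ι → ι → M} (he : IsMatrixUnits e) (i j : ι) : ‖e i j‖ ≤ 1 := by
  have h : ‖e i j‖ * ‖e i j‖ ≤ 1 := by
    rw [← CStarRing.norm_star_mul_self, he.star_eq, he.mul_eq, if_pos rfl]
    exact (he.isStarProjection_unit j).norm_le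
  exact (sq_le_one_iff₀ (norm_nonneg _)).1 (by rwa [sq])

end IsMatrixUnits

section ApproxDiag

variable {M : Type*} [CStarAlgebra M] [PartialOrder M]

/-- A column supported on the rows in `[n, m)` that compresses `S` to the corner unit `E 0 0`, of
norm at most `δ⁻¹`; the norm bound is stated as an operator inequality, so that it passes to sums
of columns with disjoint supports. -/
structure IsCompressingColumn (E : ℕ → ℕ → M) (S : M) (δ : ℝ) (n m : ℕ) (z : M) : Prop where
  lt : n < m
  diagSum_mul : diagSum E (Ico n m) * z = z
  conjugate_eq : star z * S * z = E 0 0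
  sq_smul_le : δ ^ 2 • (star z * z) ≤ E 0 0

/-- A matrix with `N` rows and `k` columns, of norm at most `δ⁻¹`, that compresses `S` to the
`k`-th diagonal projection up to an error which stays below `1 / 2` for all `k`. -/
structure IsApproxDiag (E : ℕ → ℕ → M) (S : M) (δ : ℝ) (k N : ℕ) (Y : M) : Prop where
  le : k ≤ N
  diagSum_mul : diagSum E (range N) * Y = Y
  mul_diagSum : Y * diagSum E (range k) = Y
  sq_smul_le : δ ^ 2 • (star Y * Y) ≤ diagSum E (range k)
  norm_sub_le : ‖star Y * S * Y - diagSum E (range k)‖ ≤ 1 / 2 - (1 / 2) ^ (k + 1)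

variable {E : ℕ → ℕ → M} {S : M} {δ : ℝ} {k N n m : ℕ} {Y z : M}

lemma isApproxDiag_zero : IsApproxDiag E S δ 0 0 0 := by
  constructor <;> simp [diagSum]

lemma IsCompressingColumn.diagSum_range_mul (hz : IsCompressingColumn E S δ n m z)
    (hE : IsMatrixUnits E) {l : ℕ} (hl : l ≤ n) : diagSum E (range l) * z = 0 := by
  have hdisj : range l ∩ Ico n m = ∅ := by ext; simp; omega
  rw [← hz.diagSum_mul, ← mul_assoc, hE.diagSum_mul_diagSum, hdisj, diagSum, sum_empty, zero_mul]

lemma IsCompressingColumn.diagSum_range_mul_self (hz : IsCompressingColumn E S δ n m z)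
    (hE : IsMatrixUnits E) : diagSum E (range m) * z = z := by
  have hsub : range m ∩ Ico n m = Ico n m := inter_eq_right.2 fun i hi ↦ by simp at hi ⊢; omega
  nth_rw 1 [← hz.diagSum_mul]
  rw [← mul_assoc, hE.diagSum_mul_diagSum, hsub, hz.diagSum_mul]

variable [StarOrderedRing M]

lemma IsApproxDiag.norm_le (hY : IsApproxDiag E S δ k N Y) (hE : IsMatrixUnits E) (hδ : 0 < δ) :
    ‖Y‖ ≤ δ⁻¹ :=
  norm_le_inv_of_sq_smul_star_mul_self_le_one hδ
    (hY.sq_smul_le.trans (hE.isStarProjection_diagSum _).le_one)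

lemma IsApproxDiag.add_column (hY : IsApproxDiag E S δ k N Y) (hE : IsMatrixUnits E)
    (hS : IsSelfAdjoint S) (hz : IsCompressingColumn E S δ n m z) (hNn : N ≤ n)
    (hYz : ‖star Y * S * z‖ ≤ (1 / 2) ^ (k + 3)) :
    IsApproxDiag E S δ (k + 1) m (Y + z * E 0 k) := by
  have hunit : star (E 0 k) * E 0 0 * E 0 k = E k k := by simp [hE.star_eq, hE.mul_eq]
  have hsucc : diagSum E (range (k + 1)) = diagSum E (range k) + E k k := sum_range_succ _ _
  have horth : star Y * (z * E 0 k) = 0 := by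
    rw [← hY.diagSum_mul, star_mul, (hE.isStarProjection_diagSum _).isSelfAdjoint.star_eq,
      mul_assoc, ← mul_assoc _ z, hz.diagSum_range_mul hE hNn, zero_mul, mul_zero]
  refine ⟨(hY.le.trans hNn).trans_lt hz.lt, ?_, ?_, ?_, ?_⟩
  · have hsub : range m ∩ range N = range N :=
      inter_eq_right.2 (range_subset_range.2 (hNn.trans hz.lt.le))
    rw [mul_add, ← mul_assoc, hz.diagSum_range_mul_self hE, ← hY.diagSum_mul, ← mul_assoc,
      hE.diagSum_mul_diagSum, hsub]
  · have hsub : range k ∩ range (k + 1) = range k :=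
      inter_eq_left.2 (range_subset_range.2 k.le_succ)
    rw [add_mul, mul_assoc z, hE.unit_mul_diagSum, if_pos (self_mem_range_succ k),
      ← hY.mul_diagSum, mul_assoc Y, hE.diagSum_mul_diagSum, hsub]
  · have horth' : star (z * E 0 k) * Y = 0 := by
      rw [← star_star Y, ← star_mul, horth, star_zero]
    have hcol := smul_star_mul_self_mul_right_le hz.sq_smul_le (E 0 k)
    rw [hunit] at hcol
    rw [hsucc, star_add, add_mul, mul_add, mul_add, horth, horth', add_zero, zero_add, smul_add]
    exact add_le_add hY.sq_smul_le hcol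
  · have hcol : star (z * E 0 k) * S * (z * E 0 k) = E k k := by
      rw [← hunit, ← hz.conjugate_eq, star_mul]
      simp only [mul_assoc]
    have hcross : ‖star Y * S * (z * E 0 k)‖ ≤ (1 / 2) ^ (k + 3) := by
      rw [← mul_assoc]
      refine (norm_mul_le _ _).trans (le_trans ?_ hYz)
      exact mul_le_of_le_one_right (norm_nonneg _) (hE.norm_unit_le_one 0 k)
    calc _ ≤ ‖star Y * S * Y - diagSum E (range k)‖ + 2 * ‖star Y * S * (z * E 0 k)‖ := by
          rw [hsucc, ← hcol]; exact norm_star_add_mul_mul_add_sub_add_le hS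
      _ ≤ (1 / 2 - (1 / 2) ^ (k + 1)) + 2 * (1 / 2) ^ (k + 3) := by
          gcongr; exact hY.norm_sub_le
      _ = 1 / 2 - (1 / 2) ^ (k + 1 + 1) := by ring

end ApproxDiag

lemma exists_seq_of_forall_exists {α : Type*} {p : ℕ → α → Prop} {r : ℕ → α → α → Prop} {a : α}
    (ha : p 0 a) (h : ∀ k a, p k a → ∃ b, p (k + 1) b ∧ r k a b) :
    ∃ u : ℕ → α, ∀ k, p k (u k) ∧ r k (u k) (u (k + 1)) := by
  have : Nonempty α := ⟨a⟩
  choose! next hnext using h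
  let u : ℕ → α := Nat.rec a next
  have hu : ∀ k, p k (u k) := fun k ↦ by
    induction k with
    | zero => exact ha
    | succ k ih => exact (hnext k _ ih).1
  exact ⟨u, fun k ↦ ⟨hu k, (hnext k _ (hu k)).2⟩⟩

section StrictConvergence

lemma tendsto_clm_apply_of_tendsto_pointwise {𝕜 V W : Type*} [NontriviallyNormedField 𝕜]
    [NormedAddCommGroup V] [NormedSpace 𝕜 V] [CompleteSpace V] [NormedAddCommGroup W]
    [NormedSpace 𝕜 W] {f : ℕ → V →L[𝕜] W} {g : V →L[𝕜] W}
    (hf : ∀ v, Tendsto (fun n ↦ f n v) atTop (𝓝 (g v))) {v : ℕ → V} {w : V}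
    (hv : Tendsto v atTop (𝓝 w)) : Tendsto (fun n ↦ f n (v n)) atTop (𝓝 (g w)) := by
  obtain ⟨C, hC⟩ : ∃ C, ∀ n, ‖f n‖ ≤ C := banach_steinhaus fun x ↦
    let ⟨C, hC⟩ := (hf x).norm.bddAbove_range
    ⟨C, fun n ↦ hC ⟨n, rfl⟩⟩
  have hdiff : Tendsto (fun n ↦ f n (v n - w)) atTop (𝓝 0) := by
    have h := (tendsto_iff_norm_sub_tendsto_zero.1 hv).const_mul C
    rw [mul_zero] at h
    exact squeeze_zero_norm (fun n ↦ (f n).le_of_opNorm_le (hC n) _) h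
  simpa using hdiff.add (hf w)

variable {B : Type*} [NonUnitalCStarAlgebra B]

lemma multiplier_fst_mul (x : 𝓜(ℂ, B)) (b c : B) : x.fst (b * c) = x.fst b * c := by
  have h : ∀ a, a * (x.fst (b * c) - x.fst b * c) = 0 := fun a ↦ by
    rw [mul_sub, ← x.central, ← mul_assoc, x.central, mul_assoc, sub_self]
  exact sub_eq_zero.1 ((CStarRing.star_mul_self_eq_zero_iff _).1 (h _))

lemma multiplier_coe_mul (b c : B) :
    ((b * c : B) : 𝓜(ℂ, B)) = (b : 𝓜(ℂ, B)) * (c : 𝓜(ℂ, B)) :=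
  map_mul (DoubleCentralizer.coeHom (𝕜 := ℂ) (A := B)) b c

lemma multiplier_coe_star (b : B) : ((star b : B) : 𝓜(ℂ, B)) = star (b : 𝓜(ℂ, B)) :=
  map_star (DoubleCentralizer.coeHom (𝕜 := ℂ) (A := B)) b

lemma multiplier_mul_coe_eq_coe_fst (x : 𝓜(ℂ, B)) (b : B) :
    x * (b : 𝓜(ℂ, B)) = (x.fst b : 𝓜(ℂ, B)) := by
  ext c
  · simpa using multiplier_fst_mul x b c
  · simp [x.central]

lemma multiplier_coe_mul_eq_coe_snd (b : B) (x : 𝓜(ℂ, B)) :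
    (b : 𝓜(ℂ, B)) * x = (x.snd b : 𝓜(ℂ, B)) := by
  rw [← star_star ((b : 𝓜(ℂ, B)) * x), star_mul, ← multiplier_coe_star,
    multiplier_mul_coe_eq_coe_fst, ← multiplier_coe_star, DoubleCentralizer.star_fst, star_star,
    star_star]

lemma multiplier_norm_coe (b : B) : ‖(b : 𝓜(ℂ, B))‖ = ‖b‖ := by
  rw [← DoubleCentralizer.norm_fst, DoubleCentralizer.coe_fst, ContinuousLinearMap.opNorm_mul_apply]

lemma multiplier_isometry_coe : Isometry fun b : B ↦ (b : 𝓜(ℂ, B)) :=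
  AddMonoidHomClass.isometry_of_norm (DoubleCentralizer.coeHom (𝕜 := ℂ) (A := B))
    multiplier_norm_coe

/-- Convergence of a sequence of multipliers of `B` in the strict topology: pointwise norm
convergence of left and right multiplication on `B`. -/
def TendstoStrictly (X : ℕ → 𝓜(ℂ, B)) (x : 𝓜(ℂ, B)) : Prop :=
  (∀ b, Tendsto (fun n ↦ (X n).fst b) atTop (𝓝 (x.fst b))) ∧
    ∀ b, Tendsto (fun n ↦ (X n).snd b) atTop (𝓝 (x.snd b))

namespace TendstoStrictly

variable {X Y : ℕ → 𝓜(ℂ, B)} {x y : 𝓜(ℂ, B)}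

lemma const (x : 𝓜(ℂ, B)) : TendstoStrictly (fun _ ↦ x) x :=
  ⟨fun _ ↦ tendsto_const_nhds, fun _ ↦ tendsto_const_nhds⟩

lemma sub (hX : TendstoStrictly X x) (hY : TendstoStrictly Y y) :
    TendstoStrictly (fun n ↦ X n - Y n) (x - y) :=
  ⟨fun b ↦ (hX.1 b).sub (hY.1 b), fun b ↦ (hX.2 b).sub (hY.2 b)⟩

lemma mul (hX : TendstoStrictly X x) (hY : TendstoStrictly Y y) :
    TendstoStrictly (fun n ↦ X n * Y n) (x * y) :=
  ⟨fun b ↦ tendsto_clm_apply_of_tendsto_pointwise hX.1 (hY.1 b),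
    fun b ↦ tendsto_clm_apply_of_tendsto_pointwise hY.2 (hX.2 b)⟩

lemma star (hX : TendstoStrictly X x) : TendstoStrictly (fun n ↦ star (X n)) (star x) := by
  constructor <;> intro b
  · simpa only [DoubleCentralizer.star_fst] using (hX.2 (Star.star b)).star
  · simpa only [DoubleCentralizer.star_snd] using (hX.1 (Star.star b)).star

lemma norm_le (hX : TendstoStrictly X x) {C : ℝ} (hC : ∀ᶠ n in atTop, ‖X n‖ ≤ C) : ‖x‖ ≤ C := by
  obtain ⟨n, hn⟩ := hC.exists
  rw [← DoubleCentralizer.norm_fst]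
  refine ContinuousLinearMap.opNorm_le_bound _ ((norm_nonneg _).trans hn) fun b ↦ ?_
  refine le_of_tendsto (hX.1 b).norm (hC.mono fun n hn ↦ (X n).fst.le_of_opNorm_le ?_ b)
  rwa [DoubleCentralizer.norm_fst]

end TendstoStrictly

lemma exists_tendstoStrictly_of_cauchySeq {X : ℕ → 𝓜(ℂ, B)}
    (hfst : ∀ b, CauchySeq fun n ↦ (X n).fst b) (hsnd : ∀ b, CauchySeq fun n ↦ (X n).snd b) :
    ∃ x, TendstoStrictly X x := by
  choose L hL using fun b ↦ cauchySeq_tendsto_of_complete (hfst b)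
  choose R hR using fun b ↦ cauchySeq_tendsto_of_complete (hsnd b)
  have hcentral : ∀ a b, R a * b = a * L b := fun a b ↦
    tendsto_nhds_unique ((hR a).mul_const b)
      (by simpa only [DoubleCentralizer.central] using (hL b).const_mul a)
  exact ⟨{  toProd := (continuousLinearMapOfTendsto (fun n ↦ (X n).fst) (tendsto_pi_nhds.2 hL),
              continuousLinearMapOfTendsto (fun n ↦ (X n).snd) (tendsto_pi_nhds.2 hR))
            central := hcentral }, hL, hR⟩

end StrictConvergence

/-- The multiplier defined by each element of the family `e` in `B`. -/
noncomputable def multiplierUnits {B : Type*} [NonUnitalCStarAlgebra B] (e : ℕ → ℕ → B) (i j : ℕ) :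
    𝓜(ℂ, B) :=
  (e i j : 𝓜(ℂ, B))

lemma diagSum_multiplierUnits {B : Type*} [NonUnitalCStarAlgebra B] (e : ℕ → ℕ → B)
    (s : Finset ℕ) : diagSum (multiplierUnits e) s = ((diagSum e s : B) : 𝓜(ℂ, B)) :=
  (map_sum (DoubleCentralizer.coeHom (𝕜 := ℂ) (A := B)) (fun i ↦ e i i) s).symm

/-- Matrix units exhibiting `B` as the stabilization `A ⊗ K` of its corner `A = e₀₀ B e₀₀`, whose
unit is `e₀₀`. The field `exists_mul_corner_mul_eq` says that `A` is either `ℂ` or simple and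
purely infinite, in Cuntz's form: every nonzero element of `A` can be multiplied to `e₀₀`. -/
structure IsStableMatrixUnits {B : Type*} [NonUnitalCStarAlgebra B] (e : ℕ → ℕ → B) : Prop
    extends IsMatrixUnits e where
  unit_ne_zero : e 0 0 ≠ 0
  tendsto_diagSum_mul : ∀ b, Tendsto (fun n ↦ diagSum e (range n) * b) atTop (𝓝 b)
  exists_mul_corner_mul_eq :
    ∀ b, e 0 0 * b * e 0 0 ≠ 0 → ∃ x y, x * (e 0 0 * b * e 0 0) * y = e 0 0

namespace IsStableMatrixUnits

variable {B : Type*} [NonUnitalCStarAlgebra B] {e : ℕ → ℕ → B}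

lemma tendsto_mul_diagSum (he : IsStableMatrixUnits e) (b : B) :
    Tendsto (fun n ↦ b * diagSum e (range n)) atTop (𝓝 b) := by
  simpa [(he.isStarProjection_diagSum _).isSelfAdjoint.star_eq]
    using (he.tendsto_diagSum_mul (star b)).star

lemma exists_unit_mul_mul_unit_ne_zero (he : IsStableMatrixUnits e) {c : B} (hc : c ≠ 0) :
    ∃ i j, e 0 i * c * e j 0 ≠ 0 := by
  by_contra! hzero
  have hfac : ∀ i, e i 0 * e 0 i = e i i := by simp [he.mul_eq]
  have hdiag : ∀ i j, e i i * c * e j j = 0 := fun i j ↦ calc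
    e i i * c * e j j = e i 0 * (e 0 i * c * e j 0) * e 0 j := by
      rw [← hfac i, ← hfac j]
      simp only [mul_assoc]
    _ = 0 := by rw [hzero, mul_zero, zero_mul]
  have hcompress : ∀ m n, diagSum e (range m) * (c * diagSum e (range n)) = 0 := fun m n ↦ by
    simp only [diagSum, sum_mul, mul_sum, ← mul_assoc, hdiag, sum_const_zero]
  have hright : ∀ n, c * diagSum e (range n) = 0 := fun n ↦
    tendsto_nhds_unique (he.tendsto_diagSum_mul _) (by simp only [hcompress, tendsto_const_nhds])
  exact hc (tendsto_nhds_unique (he.tendsto_mul_diagSum c)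
    (by simp only [hright, tendsto_const_nhds]))

lemma exists_mul_mul_eq_unit (he : IsStableMatrixUnits e) {c : B} (hc : c ≠ 0) :
    ∃ x y, x * c * y = e 0 0 := by
  obtain ⟨i, j, hij⟩ := he.exists_unit_mul_mul_unit_ne_zero hc
  have hcorner : e 0 0 * (e 0 i * c * e j 0) * e 0 0 = e 0 i * c * e j 0 := by
    rw [← mul_assoc, ← mul_assoc, he.mul_eq, mul_assoc _ _ (e 0 0), he.mul_eq, if_pos rfl,
      if_pos rfl]
  obtain ⟨x, y, hxy⟩ := he.exists_mul_corner_mul_eq _ (hcorner.symm ▸ hij)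
  refine ⟨x * e 0 i, e j 0 * y, ?_⟩
  rw [← hxy, hcorner]
  simp only [mul_assoc]

lemma isMatrixUnits_multiplierUnits (he : IsStableMatrixUnits e) :
    IsMatrixUnits (multiplierUnits e) :=
  he.map (DoubleCentralizer.coeHom (𝕜 := ℂ) (A := B))

lemma tendstoStrictly_diagSum (he : IsStableMatrixUnits e) :
    TendstoStrictly (fun n ↦ diagSum (multiplierUnits e) (range n)) 1 := by
  simp only [diagSum_multiplierUnits]
  exact ⟨he.tendsto_diagSum_mul, he.tendsto_mul_diagSum⟩

lemma tendsto_mul_diagSum_multiplierUnits (he : IsStableMatrixUnits e) {x : 𝓜(ℂ, B)}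
    (hx : x ∈ Set.range fun b : B ↦ (b : 𝓜(ℂ, B))) :
    Tendsto (fun n ↦ x * diagSum (multiplierUnits e) (range n)) atTop (𝓝 x) := by
  obtain ⟨b, rfl⟩ := hx
  simp only [diagSum_multiplierUnits, ← multiplier_coe_mul]
  exact (multiplier_isometry_coe.continuous.tendsto b).comp (he.tendsto_mul_diagSum b)

lemma one_notMem_range_coe (he : IsStableMatrixUnits e) :
    (1 : 𝓜(ℂ, B)) ∉ Set.range fun b : B ↦ (b : 𝓜(ℂ, B)) := fun h ↦ by
  have hlim := he.tendsto_mul_diagSum_multiplierUnits h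
  simp only [one_mul] at hlim
  obtain ⟨n, hn⟩ := (hlim.eventually (Units.isOpen.mem_nhds isUnit_one)).exists
  have hzero : multiplierUnits e n 0 = 0 := hn.mul_right_eq_zero.1 <| by
    simpa using he.isMatrixUnits_multiplierUnits.diagSum_mul_unit (range n) n 0
  have he0 : e n 0 = 0 := by
    rwa [← norm_eq_zero, ← multiplier_norm_coe, norm_eq_zero]
  exact he.unit_ne_zero (by simpa [he0] using (he.mul_eq 0 n n 0).symm)

lemma exists_lt_norm_mul_diagSum_Ico (he : IsStableMatrixUnits e) {T : 𝓜(ℂ, B)}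
    (hT : T ∉ Set.range fun b : B ↦ (b : 𝓜(ℂ, B))) :
    ∃ δ > 0, ∀ n, ∃ m > n, δ < ‖T * diagSum (multiplierUnits e) (Ico n m)‖ := by
  by_contra! hsmall
  refine hT (multiplier_isometry_coe.isClosedEmbedding.isClosed_range.closure_subset
    (Metric.mem_closure_iff.2 fun ε hε ↦ ?_))
  obtain ⟨n, hn⟩ := hsmall (ε / 2) (half_pos hε)
  refine ⟨T * diagSum (multiplierUnits e) (range n), ⟨T.fst (diagSum e (range n)), ?_⟩, ?_⟩
  · rw [diagSum_multiplierUnits, multiplier_mul_coe_eq_coe_fst]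
  have hlim := (TendstoStrictly.const T).mul (he.tendstoStrictly_diagSum.sub
    (.const (diagSum (multiplierUnits e) (range n))))
  rw [mul_sub, mul_one] at hlim
  rw [dist_eq_norm]
  refine (hlim.norm_le ((eventually_gt_atTop n).mono fun m hm ↦ ?_)).trans_lt (half_lt_self hε)
  simpa only [diagSum, sum_Ico_eq_sub _ hm.le] using hn m hm

lemma cauchySeq_fst (he : IsStableMatrixUnits e) {Y : ℕ → 𝓜(ℂ, B)} {C : ℝ}
    (hC : ∀ n, ‖Y n‖ ≤ C) (hY : ∀ m n, m ≤ n → Y n * diagSum (multiplierUnits e) (range m) =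
      Y m * diagSum (multiplierUnits e) (range m)) (b : B) :
    CauchySeq fun n ↦ (Y n).fst b := by
  refine cauchySeq_of_le_tendsto_0' (fun m ↦ (C + C) * ‖b - diagSum e (range m) * b‖)
    (fun m n hmn ↦ ?_) ?_
  · have hagree : (Y n).fst (diagSum e (range m) * b) = (Y m).fst (diagSum e (range m) * b) := by
      have h := hY m n hmn
      rw [diagSum_multiplierUnits] at h
      exact congrArg (fun x : 𝓜(ℂ, B) ↦ x.fst b) h
    have hdiff : (Y m).fst b - (Y n).fst b =
        (Y m - Y n).fst (b - diagSum e (range m) * b) := by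
      simp [hagree]
    rw [dist_eq_norm, hdiff]
    refine (Y m - Y n).fst.le_of_opNorm_le ?_ _
    rw [DoubleCentralizer.norm_fst]
    exact norm_sub_le_of_le (hC m) (hC n)
  · have h := (tendsto_iff_norm_sub_tendsto_zero.1 (he.tendsto_diagSum_mul b)).const_mul (C + C)
    simpa only [norm_sub_rev, mul_zero] using h

lemma exists_tendstoStrictly (he : IsStableMatrixUnits e) {Y : ℕ → 𝓜(ℂ, B)} {C : ℝ}
    (hC : ∀ n, ‖Y n‖ ≤ C)
    (hright : ∀ m n, m ≤ n → Y n * diagSum (multiplierUnits e) (range m) =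
      Y m * diagSum (multiplierUnits e) (range m))
    (hleft : ∀ m n, m ≤ n → diagSum (multiplierUnits e) (range m) * Y n =
      diagSum (multiplierUnits e) (range m) * Y m) :
    ∃ y, TendstoStrictly Y y := by
  have hstar : ∀ b, CauchySeq fun n ↦ (star (Y n)).fst b :=
    he.cauchySeq_fst (fun n ↦ (norm_star _).trans_le (hC n)) fun m n hmn ↦ by
      rw [← (he.isMatrixUnits_multiplierUnits.isStarProjection_diagSum _).isSelfAdjoint.star_eq,
        ← star_mul, ← star_mul, hleft m n hmn]
  refine exists_tendstoStrictly_of_cauchySeq (he.cauchySeq_fst hC hright) fun b ↦ ?_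
  simpa [Function.comp_def] using 
    (star_isometry (E := B)).uniformContinuous.comp_cauchySeq (hstar (star b))

section Order

variable [PartialOrder 𝓜(ℂ, B)] [StarOrderedRing 𝓜(ℂ, B)]

lemma exists_isCompressingColumn (he : IsStableMatrixUnits e) {T : 𝓜(ℂ, B)} {δ : ℝ} (hδ : 0 < δ)
    {n m : ℕ} (hnm : n < m) (hT : δ < ‖T * diagSum (multiplierUnits e) (Ico n m)‖) :
    ∃ z, IsCompressingColumn (multiplierUnits e) (star T * T) δ n m z := by
  have hE := he.isMatrixUnits_multiplierUnits
  set q := diagSum (multiplierUnits e) (Ico n m) with q_def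
  have hq : IsStarProjection q := hE.isStarProjection_diagSum _
  set a := star (T * q) * (T * q) with a_def
  have hqa : q * a = a := by
    rw [a_def, star_mul, hq.isSelfAdjoint.star_eq, ← mul_assoc q (q * star T), ← mul_assoc q q,
      hq.isIdempotentElem.eq]
  have ha : a = ((star (T.fst (diagSum e (Ico n m))) * T.fst (diagSum e (Ico n m)) : B) :
      𝓜(ℂ, B)) := by
    rw [a_def, q_def, diagSum_multiplierUnits, multiplier_mul_coe_eq_coe_fst, multiplier_coe_mul,
      multiplier_coe_star]
  have hnorm : δ ^ 2 < ‖a‖ := by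
    rw [a_def, CStarRing.norm_star_mul_self, ← sq]
    gcongr
  have hfull : ∀ v, a * v ≠ 0 → ∃ x y, x * (a * v) * y = multiplierUnits e 0 0 := fun v hv ↦ by
    rw [ha, multiplier_coe_mul_eq_coe_snd] at hv ⊢
    rw [← norm_ne_zero_iff, multiplier_norm_coe, norm_ne_zero_iff] at hv
    obtain ⟨x, y, hxy⟩ := he.exists_mul_mul_eq_unit hv
    exact ⟨x, y, by rw [← multiplier_coe_mul, ← multiplier_coe_mul, hxy]; rfl⟩
  obtain ⟨w, hconj, hle⟩ := exists_conjugate_eq_of_lt_norm (star_mul_self_nonneg (T * q))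
    (hE.isStarProjection_unit 0) (pow_pos hδ 2) hnorm hfull
  have hqaw : q * (a * w) = a * w := by rw [← mul_assoc, hqa]
  refine ⟨a * w, hnm, hqaw, ?_, hle⟩
  calc star (a * w) * (star T * T) * (a * w)
      = star (q * (a * w)) * (star T * T) * (q * (a * w)) := by rw [hqaw]
    _ = star (a * w) * a * (a * w) := by simp only [a_def, star_mul, mul_assoc]
    _ = multiplierUnits e 0 0 := hconj

lemma exists_isApproxDiag_succ (he : IsStableMatrixUnits e) {T : 𝓜(ℂ, B)} {δ : ℝ} (hδ : 0 < δ)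
    (hT : ∀ n, ∃ m > n, δ < ‖T * diagSum (multiplierUnits e) (Ico n m)‖) {k N : ℕ} {Y : 𝓜(ℂ, B)}
    (hY : IsApproxDiag (multiplierUnits e) (star T * T) δ k N Y) :
    ∃ N' Y', IsApproxDiag (multiplierUnits e) (star T * T) δ (k + 1) N' Y' ∧
      diagSum (multiplierUnits e) (range N) * Y' = Y ∧
      Y' * diagSum (multiplierUnits e) (range k) = Y := by
  have hE := he.isMatrixUnits_multiplierUnits
  set S := star T * T
  have hYS : star Y * S ∈ Set.range fun b : B ↦ (b : 𝓜(ℂ, B)) := by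
    rw [← hY.diagSum_mul, diagSum_multiplierUnits, multiplier_coe_mul_eq_coe_snd,
      ← multiplier_coe_star, multiplier_coe_mul_eq_coe_snd]
    exact Set.mem_range_self _
  obtain ⟨n, htail, hNn⟩ : ∃ n, dist (star Y * S * diagSum (multiplierUnits e) (range n))
      (star Y * S) < δ * (1 / 2) ^ (k + 3) ∧ N ≤ n :=
    ((Metric.tendsto_nhds.1 (he.tendsto_mul_diagSum_multiplierUnits hYS) _ (by positivity)).and
      (eventually_ge_atTop N)).exists
  obtain ⟨m, hnm, hm⟩ := hT n
  obtain ⟨z, hz⟩ := he.exists_isCompressingColumn hδ hnm hm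
  have hnormz : ‖z‖ ≤ δ⁻¹ := norm_le_inv_of_sq_smul_star_mul_self_le_one hδ
    (hz.sq_smul_le.trans (hE.isStarProjection_unit 0).le_one)
  have hYz : ‖star Y * S * z‖ ≤ (1 / 2) ^ (k + 3) := calc
    ‖star Y * S * z‖ =
        ‖(star Y * S - star Y * S * diagSum (multiplierUnits e) (range n)) * z‖ := by
      rw [sub_mul, mul_assoc _ (diagSum _ _) z, hz.diagSum_range_mul hE le_rfl, mul_zero, sub_zero]
    _ ≤ δ * (1 / 2) ^ (k + 3) * δ⁻¹ := by
      rw [dist_comm, dist_eq_norm] at htail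
      exact norm_mul_le_of_le htail.le hnormz
    _ = (1 / 2) ^ (k + 3) := by field_simp
  refine ⟨m, _, hY.add_column hE (.star_mul_self T) hz hNn hYz, ?_, ?_⟩
  · rw [mul_add, hY.diagSum_mul, ← mul_assoc, hz.diagSum_range_mul hE hNn, zero_mul, add_zero]
  · rw [add_mul, hY.mul_diagSum, mul_assoc, hE.unit_mul_diagSum, if_neg notMem_range_self,
      mul_zero, add_zero]

lemma exists_isApproxDiag_seq (he : IsStableMatrixUnits e) {T : 𝓜(ℂ, B)} {δ : ℝ} (hδ : 0 < δ)
    (hT : ∀ n, ∃ m > n, δ < ‖T * diagSum (multiplierUnits e) (Ico n m)‖) :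
    ∃ (N : ℕ → ℕ) (Y : ℕ → 𝓜(ℂ, B)),
      (∀ k, IsApproxDiag (multiplierUnits e) (star T * T) δ k (N k) (Y k)) ∧
      (∀ k, diagSum (multiplierUnits e) (range (N k)) * Y (k + 1) = Y k) ∧
      ∀ k, Y (k + 1) * diagSum (multiplierUnits e) (range k) = Y k := by
  obtain ⟨u, hu⟩ := exists_seq_of_forall_exists
    (p := fun k (a : ℕ × 𝓜(ℂ, B)) ↦ IsApproxDiag (multiplierUnits e) (star T * T) δ k a.1 a.2)
    (r := fun k a b ↦ diagSum (multiplierUnits e) (range a.1) * b.2 = a.2 ∧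
      b.2 * diagSum (multiplierUnits e) (range k) = a.2)
    (a := (0, 0)) isApproxDiag_zero fun k a ha ↦
      let ⟨N', Y', h⟩ := he.exists_isApproxDiag_succ hδ hT ha
      ⟨(N', Y'), h⟩
  exact ⟨fun k ↦ (u k).1, fun k ↦ (u k).2, fun k ↦ (hu k).1, fun k ↦ (hu k).2.1,
    fun k ↦ (hu k).2.2⟩

lemma exists_tendstoStrictly_norm_sub_one_le (he : IsStableMatrixUnits e) {T : 𝓜(ℂ, B)}
    (hT : T ∉ Set.range fun b : B ↦ (b : 𝓜(ℂ, B))) :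
    ∃ y, ‖star y * (star T * T) * y - 1‖ ≤ 1 / 2 := by
  have hE := he.isMatrixUnits_multiplierUnits
  obtain ⟨δ, hδ, hlow⟩ := he.exists_lt_norm_mul_diagSum_Ico hT
  obtain ⟨N, Y, hY, hrow, hcol⟩ := he.exists_isApproxDiag_seq hδ hlow
  have hright : ∀ m n, m ≤ n → Y n * diagSum (multiplierUnits e) (range m) =
      Y m * diagSum (multiplierUnits e) (range m) := fun m n hmn ↦ by
    induction n, hmn using Nat.le_induction with
    | base => rfl
    | succ n hmn ih =>
      have hsub : range n ∩ range m = range m := inter_eq_right.2 (range_subset_range.2 hmn)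
      rw [← ih, ← hcol n, mul_assoc _ _ (diagSum _ (range m)), hE.diagSum_mul_diagSum, hsub]
  have hleft : ∀ m n, m ≤ n → diagSum (multiplierUnits e) (range m) * Y n =
      diagSum (multiplierUnits e) (range m) * Y m := fun m n hmn ↦ by
    induction n, hmn using Nat.le_induction with
    | base => rfl
    | succ n hmn ih =>
      have hsub : range m ∩ range (N n) = range m :=
        inter_eq_left.2 (range_subset_range.2 (hmn.trans (hY n).le))
      rw [← ih, ← hrow n, ← mul_assoc, hE.diagSum_mul_diagSum, hsub]
  obtain ⟨y, hy⟩ := he.exists_tendstoStrictly (fun k ↦ (hY k).norm_le hE hδ) hright hleft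
  refine ⟨y, ((hy.star.mul (.const _)).mul hy |>.sub he.tendstoStrictly_diagSum).norm_le
    (.of_forall fun k ↦ (hY k).norm_sub_le.trans ?_)⟩
  linarith [pow_pos (one_half_pos (α := ℝ)) (k + 1)]

end Order

lemma exists_mul_mul_eq_one (he : IsStableMatrixUnits e) {T : 𝓜(ℂ, B)}
    (hT : T ∉ Set.range fun b : B ↦ (b : 𝓜(ℂ, B))) : ∃ x y, x * T * y = 1 := by
  let := CStarAlgebra.spectralOrder 𝓜(ℂ, B)
  let := CStarAlgebra.spectralOrderedRing 𝓜(ℂ, B)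
  obtain ⟨y, hy⟩ := he.exists_tendstoStrictly_norm_sub_one_le hT
  have hunit : IsUnit (star y * (star T * T) * y) := by
    have h := isUnit_one_sub_of_norm_lt_one (x := 1 - star y * (star T * T) * y)
      (by rw [norm_sub_rev]; linarith)
    rwa [sub_sub_cancel] at h
  obtain ⟨v, hv⟩ := hunit.exists_left_inv
  exact ⟨v * star y * star T, y, by rw [← hv]; simp only [mul_assoc]⟩

end IsStableMatrixUnits

theorem stmt17_general {B : Type*} [NonUnitalCStarAlgebra B] {Q : Type*} [CStarAlgebra Q]
    {e : ℕ → ℕ → B} (he : IsStableMatrixUnits e) (π : 𝓜(ℂ, B) →⋆ₐ[ℂ] Q)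
    (hsurj : Function.Surjective π)
    (hker : ∀ x : 𝓜(ℂ, B), π x = 0 ↔ ∃ b : B, x = (b : 𝓜(ℂ, B))) :
    PropP1 𝓜(ℂ, B) ∧ PropP1 Q := by
  have hsolve : ∀ T, π T ≠ 0 → ∃ x y, x * T * y = 1 := fun T hT ↦
    he.exists_mul_mul_eq_one fun ⟨b, hb⟩ ↦ hT ((hker T).2 ⟨b, hb.symm⟩)
  have : Nontrivial Q := ⟨π 1, 0, fun h ↦
    let ⟨b, hb⟩ := (hker 1).1 h
    he.one_notMem_range_coe ⟨b, hb.symm⟩⟩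
  have hπ : Continuous (π : 𝓜(ℂ, B) →+* Q) := AddMonoidHomClass.continuous_of_bound π 1 fun x ↦ by
    simpa using NonUnitalStarAlgHom.norm_apply_le π x
  refine ⟨propP1_of_forall_map_ne_zero hπ hsolve,
    propP1_of_forall_map_ne_zero (f := RingHom.id Q) continuous_id fun q hq ↦ ?_⟩
  obtain ⟨T, rfl⟩ := hsurj q
  obtain ⟨x, y, hxy⟩ := hsolve T hq
  exact ⟨π x, π y, by rw [← map_mul, ← map_mul, hxy, map_one]⟩

/-- `B = A ⊗ K` with `A` unital purely infinite simple is modelled by a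
system of matrix units whose diagonal sums form an approximate identity and whose corner
`e₀₀ B e₀₀` (a copy of `A`, with unit `e₀₀`) is purely infinite and simple (Cuntz's
characterization: every nonzero corner element can be multiplied to the unit `e₀₀`,
and the corner is noncommutative).  Then both the multiplier algebra `𝓜(ℂ, B)` and the
corona `M(B)/B` (modelled by a surjective `π` with kernel `B`) have property (P1). -/
theorem stmt17 {B : Type*} [NonUnitalCStarAlgebra B] {Q : Type*} [CStarAlgebra Q]
    (e : ℕ → ℕ → B)
    (he_star : ∀ i j, star (e i j) = e j i)
    (he_mul : ∀ i j k l, e i j * e k l = if j = k then e i l else 0)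
    (he_ne : ∀ i, e i i ≠ 0)
    (happrox : ∀ b : B,
      Filter.Tendsto (fun n => ‖(∑ i ∈ Finset.range n, e i i) * b - b‖)
        Filter.atTop (nhds 0) ∧
      Filter.Tendsto (fun n => ‖b * (∑ i ∈ Finset.range n, e i i) - b‖)
        Filter.atTop (nhds 0))
    -- the corner e₀₀ B e₀₀ ≅ A is purely infinite and simple
    (hpi : ∀ b : B, e 0 0 * b * e 0 0 ≠ 0 →
      ∃ x y : B, (e 0 0 * x * e 0 0) * (e 0 0 * b * e 0 0) * (e 0 0 * y * e 0 0) = e 0 0)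
    (hnc : ∃ x y : B,
      (e 0 0 * x * e 0 0) * (e 0 0 * y * e 0 0) ≠ (e 0 0 * y * e 0 0) * (e 0 0 * x * e 0 0))
    (π : 𝓜(ℂ, B) →⋆ₐ[ℂ] Q) (hsurj : Function.Surjective π)
    (hker : ∀ x : 𝓜(ℂ, B), π x = 0 ↔ ∃ b : B, x = (b : 𝓜(ℂ, B))) :
    PropP1 𝓜(ℂ, B) ∧ PropP1 Q := by
  have he : IsStableMatrixUnits e := ⟨⟨he_star, he_mul⟩, he_ne 0,
    fun b ↦ tendsto_iff_norm_sub_tendsto_zero.2 (happrox b).1,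
    fun b hb ↦ let ⟨_, _, h⟩ := hpi b hb; ⟨_, _, h⟩⟩
  exact stmt17_general he π hsurj hker
end

section
/- Let A be a separable C*-algebra with a closed two-sided ideal I, let B be a unital C*-algebra with property (P1), and let j : A → B be an embedding such that j(a) is full in B for every a ∉ I. Then for any pure state φ : A → ℂ vanishing on I, any finite subset F ⊆ A, and any ε > 0, there exists a partial isometry V ∈ B with V*V = 1_B, VV* in the hereditary subalgebra generated by j(A), and ‖φ(a)·1_B − V*·j(a)·V‖ < ε for all a ∈ F. -/
open scoped ENNReal MultiplierAlgebra

open scoped ComplexOrder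

/-
A pure state `φ` is an extreme point of the compact convex set of quasi-states of `A`, so by
Choquet's lemma every weak-* neighbourhood of `φ` contains all quasi-states `ψ` in some slice
`β ≤ Re ψ(s)` with `s` self-adjoint and `0 < β < φ(s)`. If `b` denotes the square root of the
positive part of `s - β`, then `φ(b²) ≠ 0`, so `j(b²)` is full and (P1) yields `z` such that
`V = j(b)z` is an isometry. As `b * s * b ≥ β * b²`, also `V* j(s) V ≥ β`. Hence, for every state
`g` of `B`, the quasi-state `a ↦ g(V* j(a) V)` lies in the slice and is close to `φ` on the given
finite set. The norm estimate follows because the norm of an element of `B` is at most twice its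
numerical radius.
-/

open scoped Topology

section ExtremePoints

variable {E : Type*} [AddCommGroup E] [Module ℝ E]

theorem notMem_convexJoin_of_mem_extremePoints {K C D : Set E} {x : E}
    (hx : x ∈ K.extremePoints ℝ) (hCK : C ⊆ K) (hDK : D ⊆ K) (hxC : x ∉ C) (hxD : x ∉ D) :
    x ∉ convexJoin ℝ C D := by
  rw [mem_convexJoin]
  rintro ⟨y, hy, z, hz, hxyz⟩
  obtain rfl | rfl := (mem_extremePoints_iff_forall_segment.1 hx).2 y (hCK hy) z (hDK hz) hxyz
  exacts [hxC hy, hxD hz]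

variable [TopologicalSpace E] [IsTopologicalAddGroup E] [ContinuousSMul ℝ E]

theorem isCompact_convexJoin {C D : Set E} (hC : IsCompact C) (hD : IsCompact D) :
    IsCompact (convexJoin ℝ C D) := by
  have himage : convexJoin ℝ C D =
      (fun p : ℝ × E × E ↦ (1 - p.1) • p.2.1 + p.1 • p.2.2) '' (Set.Icc 0 1 ×ˢ C ×ˢ D) := by
    ext z
    simp only [mem_convexJoin, segment_eq_image, Set.mem_image, Set.mem_prod, Prod.exists]
    exact ⟨fun ⟨x, hx, y, hy, t, ht, h⟩ ↦ ⟨t, x, y, ⟨ht, hx, hy⟩, h⟩,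
      fun ⟨t, x, y, ⟨ht, hx, hy⟩, h⟩ ↦ ⟨x, hx, y, hy, t, ht, h⟩⟩
  rw [himage]
  exact (isCompact_Icc.prod (hC.prod hD)).image (by fun_prop)

theorem exists_isCompact_convex_union_subset_of_mem_extremePoints {K C D : Set E} {x : E}
    (hK : Convex ℝ K) (hx : x ∈ K.extremePoints ℝ)
    (hC : C ⊆ K ∧ Convex ℝ C ∧ IsCompact C ∧ x ∉ C)
    (hD : D ⊆ K ∧ Convex ℝ D ∧ IsCompact D ∧ x ∉ D) :
    ∃ L, (L ⊆ K ∧ Convex ℝ L ∧ IsCompact L ∧ x ∉ L) ∧ C ∪ D ⊆ L := by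
  obtain rfl | hC₀ := C.eq_empty_or_nonempty
  · exact ⟨D, hD, (Set.empty_union D).subset⟩
  obtain rfl | hD₀ := D.eq_empty_or_nonempty
  · exact ⟨C, hC, (Set.union_empty C).subset⟩
  exact ⟨convexJoin ℝ C D,
    ⟨convexJoin_subset hC.1 hD.1 hK, hC.2.1.convexJoin hD.2.1,
      isCompact_convexJoin hC.2.2.1 hD.2.2.1,
      notMem_convexJoin_of_mem_extremePoints hx hC.1 hD.1 hC.2.2.2 hD.2.2.2⟩,
    Set.union_subset (subset_convexJoin_left hD₀) (subset_convexJoin_right hC₀)⟩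

variable [LocallyConvexSpace ℝ E] [T2Space E]

theorem exists_isClosed_convex_mem_nhds_notMem {x y : E} (hxy : x ≠ y) :
    ∃ D ∈ 𝓝 y, Convex ℝ D ∧ IsClosed D ∧ x ∉ D := by
  obtain ⟨f, hf⟩ := geometric_hahn_banach_point_point hxy.symm
  obtain ⟨c, hyc, hcx⟩ := exists_between hf
  exact ⟨{z | f z ≤ c}, f.continuous.continuousAt.eventually (Iic_mem_nhds hyc),
    convex_halfSpace_le f.toLinearMap.isLinear c, isClosed_le f.continuous continuous_const,
    hcx.not_ge⟩

/-- **Milman's converse** to the Krein–Milman theorem. The subsets of `K` contained in a compact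
convex `L ⊆ K` that avoids the extreme point `x` are closed under finite unions, so compactness
reduces the claim to small neighbourhoods of the points of `S`. -/
theorem notMem_closedConvexHull_of_mem_extremePoints {K S : Set E} {x : E} (hK : Convex ℝ K)
    (hKc : IsCompact K) (hx : x ∈ K.extremePoints ℝ) (hS : IsCompact S) (hSK : S ⊆ K)
    (hxS : x ∉ S) : x ∉ closedConvexHull ℝ S := by
  suffices ∃ L, (L ⊆ K ∧ Convex ℝ L ∧ IsCompact L ∧ x ∉ L) ∧ S ⊆ L by
    obtain ⟨L, ⟨-, hL, hLc, hxL⟩, hSL⟩ := this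
    exact fun h ↦ hxL (closedConvexHull_min hSL hL hLc.isClosed h)
  refine hS.induction_on (p := fun T ↦ ∃ L, (L ⊆ K ∧ Convex ℝ L ∧ IsCompact L ∧ x ∉ L) ∧ T ⊆ L)
    ⟨∅, by simp [convex_empty]⟩ (fun _ _ hT ⟨L, hL, hTL⟩ ↦ ⟨L, hL, hT.trans hTL⟩) ?_ fun y hy ↦ ?_
  · rintro T₁ T₂ ⟨L₁, hL₁, hTL₁⟩ ⟨L₂, hL₂, hTL₂⟩
    obtain ⟨L, hL, hLL⟩ :=
      exists_isCompact_convex_union_subset_of_mem_extremePoints hK hx hL₁ hL₂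
    exact ⟨L, hL, (Set.union_subset_union hTL₁ hTL₂).trans hLL⟩
  · obtain ⟨D, hDy, hD, hDc, hxD⟩ :=
      exists_isClosed_convex_mem_nhds_notMem (ne_of_mem_of_not_mem hy hxS).symm
    exact ⟨K ∩ D, Filter.inter_mem (Filter.mem_of_superset self_mem_nhdsWithin hSK)
      (mem_nhdsWithin_of_mem_nhds hDy), K ∩ D, ⟨Set.inter_subset_left, hK.inter hD,
        hKc.inter_right hDc, fun h ↦ hxD h.2⟩, subset_rfl⟩

/-- **Choquet's lemma** -/
theorem exists_slice_subset_of_mem_extremePoints (𝕜 : Type*) [RCLike 𝕜] [Module 𝕜 E]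
    [IsScalarTower ℝ 𝕜 E] [ContinuousSMul 𝕜 E] {K U : Set E} {x : E} (hK : Convex ℝ K)
    (hKc : IsCompact K) (hx : x ∈ K.extremePoints ℝ) (hU : U ∈ 𝓝 x) :
    ∃ (f : StrongDual 𝕜 E) (β : ℝ), β < RCLike.re (f x) ∧
      ∀ y ∈ K, β ≤ RCLike.re (f y) → y ∈ U := by
  have hxU : x ∉ closedConvexHull ℝ (K \ interior U) :=
    notMem_closedConvexHull_of_mem_extremePoints hK hKc hx (hKc.diff isOpen_interior)
      Set.sdiff_subset fun h ↦ h.2 (mem_interior_iff_mem_nhds.2 hU)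
  obtain ⟨f, β, hf, hfx⟩ := RCLike.geometric_hahn_banach_closed_point (𝕜 := 𝕜)
    convex_closedConvexHull isClosed_closedConvexHull hxU
  refine ⟨f, β, hfx, fun y hyK hy ↦ ?_⟩
  by_contra hyU
  exact (hf y (subset_closedConvexHull ⟨hyK, fun h ↦ hyU (interior_subset h)⟩)).not_ge hy

end ExtremePoints

section QuasiStates

variable {A : Type*} [NonUnitalCStarAlgebra A]

/-- The quasi-state space of `A`: the positive functionals of norm at most `1`, with the weak-*
topology, in which it is compact. -/
def quasiStates (A : Type*) [NonUnitalCStarAlgebra A] : Set (WeakDual ℂ A) :=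
  {ψ | ∀ a : A, 0 ≤ ψ (star a * a)} ∩ WeakDual.toStrongDual ⁻¹' Metric.closedBall 0 1

/-- A pure state: a positive functional `φ` of norm `1` such that every positive functional
dominated by `φ` is a multiple of `φ`. Positivity and domination are tested on the elements
`star a * a`, so that no order on `A` is needed. -/
structure IsPureState (φ : A →L[ℂ] ℂ) : Prop where
  apply_star_mul_self_nonneg : ∀ a : A, 0 ≤ φ (star a * a)
  norm_eq_one : ‖φ‖ = 1
  exists_eq_smul_of_le : ∀ ψ : A →L[ℂ] ℂ, (∀ a : A, 0 ≤ ψ (star a * a)) →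
    (∀ a : A, 0 ≤ φ (star a * a) - ψ (star a * a)) → ∃ t : ℝ, ψ = (t : ℂ) • φ

theorem zero_mem_quasiStates : (0 : WeakDual ℂ A) ∈ quasiStates A :=
  ⟨fun _ ↦ le_rfl, by simp⟩

theorem norm_le_one_of_mem_quasiStates {ψ : WeakDual ℂ A} (hψ : ψ ∈ quasiStates A) :
    ‖WeakDual.toStrongDual ψ‖ ≤ 1 :=
  mem_closedBall_zero_iff.1 hψ.2

theorem norm_apply_le_of_mem_quasiStates {ψ : WeakDual ℂ A} (hψ : ψ ∈ quasiStates A) (a : A) :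
    ‖ψ a‖ ≤ ‖a‖ :=
  (ContinuousLinearMap.le_of_opNorm_le _ (norm_le_one_of_mem_quasiStates hψ) a).trans_eq
    (one_mul _)

theorem convex_quasiStates : Convex ℝ (quasiStates A) :=
  fun _ hψ _ hχ _ _ hs ht hst ↦
    ⟨fun a ↦ add_nonneg (smul_nonneg hs (hψ.1 a)) (smul_nonneg ht (hχ.1 a)),
      convex_closedBall (0 : StrongDual ℂ A) 1 hψ.2 hχ.2 hs ht hst⟩

theorem isCompact_quasiStates : IsCompact (quasiStates A) := by
  refine (WeakDual.isCompact_closedBall (0 : StrongDual ℂ A) 1).inter_left ?_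
  simp only [Set.ofPred_forall]
  exact isClosed_iInter fun a ↦ isClosed_le continuous_const (WeakDual.eval_continuous _)

theorem apply_nonneg_of_mem_quasiStates [PartialOrder A] [StarOrderedRing A] {ψ : WeakDual ℂ A}
    (hψ : ψ ∈ quasiStates A) {a : A} (ha : 0 ≤ a) : 0 ≤ ψ a := by
  obtain ⟨b, rfl⟩ := CStarAlgebra.nonneg_iff_eq_star_mul_self.1 ha
  exact hψ.1 b

theorem re_apply_mono_of_mem_quasiStates [PartialOrder A] [StarOrderedRing A] {ψ : WeakDual ℂ A}
    (hψ : ψ ∈ quasiStates A) {a b : A} (hab : a ≤ b) : (ψ a).re ≤ (ψ b).re := by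
  have h := (Complex.nonneg_iff.1 (apply_nonneg_of_mem_quasiStates hψ (sub_nonneg.2 hab))).1
  rwa [map_sub, Complex.sub_re, sub_nonneg] at h

theorem apply_realPart_of_mem_quasiStates {ψ : WeakDual ℂ A} (hψ : ψ ∈ quasiStates A) (a : A) :
    ψ (realPart a) = (ψ a).re := by
  let := CStarAlgebra.spectralOrder A
  let := CStarAlgebra.spectralOrderedRing A
  exact map_realPart (PositiveLinearMap.mk₀ (WeakDual.toStrongDual ψ).toLinearMap
    fun _ ↦ apply_nonneg_of_mem_quasiStates hψ) a |>.trans (Complex.coe_realPart _)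

theorem apply_imaginaryPart_of_mem_quasiStates {ψ : WeakDual ℂ A} (hψ : ψ ∈ quasiStates A)
    (a : A) : ψ (imaginaryPart a) = (ψ a).im := by
  simpa using apply_realPart_of_mem_quasiStates hψ (-Complex.I • a)

namespace IsPureState

variable {φ : A →L[ℂ] ℂ}

theorem mem_quasiStates (hφ : IsPureState φ) : StrongDual.toWeakDual φ ∈ quasiStates A :=
  ⟨hφ.apply_star_mul_self_nonneg, mem_closedBall_zero_iff.2 hφ.norm_eq_one.le⟩

theorem mem_extremePoints (hφ : IsPureState φ) :
    StrongDual.toWeakDual φ ∈ (quasiStates A).extremePoints ℝ := by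
  refine ⟨hφ.mem_quasiStates, ?_⟩
  rintro ψ hψ χ hχ ⟨s, t, hs, ht, hst, h⟩
  have hsum : (s : ℂ) • WeakDual.toStrongDual ψ + (t : ℂ) • WeakDual.toStrongDual χ = φ := h
  obtain ⟨r, hr⟩ := hφ.exists_eq_smul_of_le ((s : ℂ) • WeakDual.toStrongDual ψ)
    (fun a ↦ mul_nonneg (by exact_mod_cast hs.le) (hψ.1 a))
    (fun a ↦ by
      simpa [← hsum] using mul_nonneg (by exact_mod_cast ht.le) (hχ.1 a))
  have hr' : (t : ℂ) • WeakDual.toStrongDual χ = ((1 - r : ℝ) : ℂ) • φ := by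
    rw [eq_sub_of_add_eq' hsum, hr]
    ext a
    simp [sub_mul]
  have abs_le {ω : WeakDual ℂ A} {u v : ℝ} (hω : ω ∈ quasiStates A) (hu : 0 < u)
      (h : (u : ℂ) • WeakDual.toStrongDual ω = (v : ℂ) • φ) : |v| ≤ u := by
    have h : u * ‖WeakDual.toStrongDual ω‖ = |v| := by
      simpa [norm_smul, abs_of_pos hu, hφ.norm_eq_one] using congrArg norm h
    exact h ▸ mul_le_of_le_one_right hu.le (norm_le_one_of_mem_quasiStates hω)
  obtain rfl : r = s := by
    linarith [le_abs_self r, le_abs_self (1 - r), abs_le hψ hs hr, abs_le hχ ht hr']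
  exact WeakDual.toStrongDual.injective
    (smul_right_injective _ (Complex.ofReal_ne_zero.2 hs.ne') hr)

theorem exists_slice_subset (hφ : IsPureState φ) {U : Set (WeakDual ℂ A)}
    (hU : U ∈ 𝓝 (StrongDual.toWeakDual φ)) :
    ∃ (s : A) (β : ℝ), IsSelfAdjoint s ∧ 0 < β ∧ β < (φ s).re ∧
      ∀ ψ ∈ quasiStates A, β ≤ (ψ s).re → ψ ∈ U := by
  have : IsScalarTower ℝ ℂ (WeakDual ℂ A) :=
    inferInstanceAs (IsScalarTower ℝ ℂ (StrongDual ℂ A))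
  have : ContinuousSMul ℝ (WeakDual ℂ A) := IsScalarTower.continuousSMul ℂ
  have : LocallyConvexSpace ℝ (WeakDual ℂ A) :=
    inferInstanceAs (LocallyConvexSpace ℝ (WeakBilin (topDualPairing ℂ A)))
  have hφ₀ : StrongDual.toWeakDual φ ≠ 0 :=
    (map_ne_zero_iff _ StrongDual.toWeakDual.injective).2
      (norm_ne_zero_iff.1 (hφ.norm_eq_one ▸ one_ne_zero))
  -- A slice that misses the quasi-state `0` has a positive level `β`.
  have choquet := exists_slice_subset_of_mem_extremePoints (E := WeakDual ℂ A) ℂ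
    convex_quasiStates isCompact_quasiStates hφ.mem_extremePoints
    (Filter.inter_mem hU (isOpen_ne.mem_nhds hφ₀))
  obtain ⟨f, β, hβ, hf⟩ := choquet
  obtain ⟨s, rfl⟩ := LinearMap.dualEmbedding_surjective (topDualPairing ℂ A) f
  have hre {ψ : WeakDual ℂ A} (hψ : ψ ∈ quasiStates A) : (ψ (realPart s)).re = (ψ s).re := by
    rw [apply_realPart_of_mem_quasiStates hψ, Complex.ofReal_re]
  refine ⟨realPart s, β, (realPart s).2, ?_, hβ.trans_eq (hre hφ.mem_quasiStates).symm,
    fun ψ hψ hψs ↦ (hf ψ hψ (hψs.trans_eq (hre hψ))).1⟩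
  exact not_le.1 fun h ↦ (hf 0 zero_mem_quasiStates h).2 rfl

end IsPureState

end QuasiStates

section SqrtCut

variable {A : Type*} [NonUnitalCStarAlgebra A]

/-- The square root of the part of a self-adjoint element `s` above the level `β`, that is
`(s - β)₊ ^ (1 / 2)`, where the difference is taken in the unitization. It is meant for `0 ≤ β`,
where the functional calculus is that of a function vanishing at `0`. -/
noncomputable def sqrtCut (β : ℝ) (s : A) : A :=
  cfcₙ (fun t ↦ √(max 0 (t - β))) s

theorem isSelfAdjoint_sqrtCut (β : ℝ) (s : A) : IsSelfAdjoint (sqrtCut β s) :=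
  cfcₙ_predicate _ _

theorem sqrtCut_mul_self {β : ℝ} (hβ : 0 ≤ β) (s : A) :
    sqrtCut β s * sqrtCut β s = cfcₙ (fun t ↦ max 0 (t - β)) s := by
  rw [sqrtCut, ← cfcₙ_mul _ _ s (by fun_prop) (by simp [hβ]) (by fun_prop) (by simp [hβ])]
  exact cfcₙ_congr fun t _ ↦ Real.mul_self_sqrt (le_max_left _ _)

variable [PartialOrder A] [StarOrderedRing A]

theorem smul_sqrtCut_mul_self_le {β : ℝ} (hβ : 0 ≤ β) {s : A} (hs : IsSelfAdjoint s) :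
    β • (sqrtCut β s * sqrtCut β s) ≤ sqrtCut β s * s * sqrtCut β s := by
  have hconj : sqrtCut β s * s * sqrtCut β s =
      cfcₙ (fun t ↦ √(max 0 (t - β)) * t * √(max 0 (t - β))) s := by
    rw [cfcₙ_mul _ (fun t ↦ √(max 0 (t - β))) s (by fun_prop) (by simp) (by fun_prop)
        (by simp [hβ]),
      cfcₙ_mul _ (fun t ↦ t) s (by fun_prop) (by simp [hβ]) (by fun_prop) rfl, cfcₙ_id' ℝ s,
      sqrtCut]
  rw [hconj, sqrtCut_mul_self hβ, ← cfcₙ_smul β _ s (by fun_prop) (by simp [hβ])]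
  refine cfcₙ_mono (fun t _ ↦ ?_) (by fun_prop) (by fun_prop) (by simp [hβ]) (by simp)
  rw [mul_right_comm, Real.mul_self_sqrt (le_max_left _ _), smul_eq_mul, mul_comm]
  obtain h | h := le_total (t - β) 0
  · simp [h]
  · exact mul_le_mul_of_nonneg_left (sub_nonneg.1 h) (le_max_left _ _)

theorem exists_norm_le_and_le_add_sqrtCut_mul_self {β : ℝ} (hβ : 0 ≤ β) {s : A}
    (hs : IsSelfAdjoint s) : ∃ c : A, ‖c‖ ≤ β ∧ s ≤ c + sqrtCut β s * sqrtCut β s := by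
  refine ⟨cfcₙ (fun t ↦ min (max t 0) β) s, norm_cfcₙ_le fun t _ ↦ ?_, ?_⟩
  · rw [Real.norm_of_nonneg (by positivity)]
    exact min_le_right _ _
  · rw [sqrtCut_mul_self hβ, ← cfcₙ_add _ _ (a := s) (by fun_prop) (by simp [hβ]) (by fun_prop)
      (by simp [hβ])]
    conv_lhs => rw [← cfcₙ_id' ℝ s]
    exact cfcₙ_mono (fun t _ ↦ by grind) (by fun_prop) (by fun_prop) rfl (by simp [hβ])

theorem apply_sqrtCut_mul_self_ne_zero {φ : WeakDual ℂ A} (hφ : φ ∈ quasiStates A) {β : ℝ}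
    (hβ : 0 ≤ β) {s : A} (hs : IsSelfAdjoint s) (hφs : β < (φ s).re) :
    φ (sqrtCut β s * sqrtCut β s) ≠ 0 := by
  intro h
  obtain ⟨c, hc, hsc⟩ := exists_norm_le_and_le_add_sqrtCut_mul_self hβ hs
  refine hφs.not_ge ?_
  calc (φ s).re ≤ (φ (c + sqrtCut β s * sqrtCut β s)).re := re_apply_mono_of_mem_quasiStates hφ hsc
    _ = (φ c).re := by rw [map_add, h, add_zero]
    _ ≤ ‖φ c‖ := Complex.re_le_norm _
    _ ≤ ‖c‖ := norm_apply_le_of_mem_quasiStates hφ c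
    _ ≤ β := hc

end SqrtCut

section Isometry

variable {B : Type*} [CStarAlgebra B]

theorem isUnit_star_mul_self_of_mul_eq_one {x p : B} (h : x * p = 1) : IsUnit (star p * p) := by
  let := CStarAlgebra.spectralOrder B
  let := CStarAlgebra.spectralOrderedRing B
  have hle : (1 : B) ≤ (‖x‖ ^ 2) • (star p * p) := by
    calc (1 : B) = star p * (star x * x) * p := by
          rw [mul_assoc, mul_assoc, h, mul_one, ← star_mul, h, star_one]
      _ ≤ star p * algebraMap ℝ B (‖x‖ ^ 2) * p :=
          star_left_conjugate_le_conjugate CStarAlgebra.star_mul_le_algebraMap_norm_sq p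
      _ = _ := by
          rw [Algebra.algebraMap_eq_smul_one, mul_smul_comm, smul_mul_assoc, mul_one]
  have hunit := CStarAlgebra.isUnit_of_le 1 hle
  rw [Algebra.smul_def, Commute.isUnit_mul_iff (Algebra.commutes _ _)] at hunit
  exact hunit.2

theorem exists_star_mul_self_eq_one_of_mul_eq_one {x p : B} (h : x * p = 1) :
    ∃ r : B, star (p * r) * (p * r) = 1 := by
  let := CStarAlgebra.spectralOrder B
  let := CStarAlgebra.spectralOrderedRing B
  have hsa : star ((star p * p) ^ (-(1 / 2) : ℝ)) = (star p * p) ^ (-(1 / 2) : ℝ) :=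
    (IsSelfAdjoint.of_nonneg CFC.rpow_nonneg).star_eq
  refine ⟨(star p * p) ^ (-(1 / 2) : ℝ), ?_⟩
  rw [star_mul, hsa]
  simpa only [mul_assoc] using CFC.conjugate_rpow_neg_one_half (star p * p)
    ⟨star_mul_self_nonneg p, isUnit_star_mul_self_of_mul_eq_one h⟩

theorem PropP1.exists_isometry (hP1 : PropP1 B) {a c : B} (hac : IsFullIn (a * c)) :
    ∃ z : B, star (c * z) * (c * z) = 1 := by
  obtain ⟨x, y, hxy⟩ := hP1 _ hac
  obtain ⟨r, hr⟩ := exists_star_mul_self_eq_one_of_mul_eq_one (x := x * a) (p := c * y)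
    (by rw [← hxy]; simp only [mul_assoc])
  exact ⟨y * r, by rwa [← mul_assoc c]⟩

end Isometry

section Compression

variable {A B : Type*} [NonUnitalCStarAlgebra A] [CStarAlgebra B]

theorem algebraMap_le_star_mul_map_mul_of_smul_le [PartialOrder A] [StarOrderedRing A]
    [PartialOrder B] [StarOrderedRing B] {j : A →⋆ₙₐ[ℂ] B} {b s : A} (hb : IsSelfAdjoint b)
    {β : ℝ} (h : β • (b * b) ≤ b * s * b) {z : B} (hz : star (j b * z) * (j b * z) = 1) :
    algebraMap ℝ B β ≤ star (j b * z) * j s * (j b * z) := by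
  have hjb : star (j b) = j b := (hb.map j).star_eq
  calc algebraMap ℝ B β = star z * j (β • (b * b)) * z := by
        rw [Algebra.algebraMap_eq_smul_one, ← hz, ← Complex.coe_smul, ← Complex.coe_smul,
          map_smul, map_mul, star_mul, hjb, mul_smul_comm, smul_mul_assoc]
        simp only [mul_assoc]
    _ ≤ star z * j (b * s * b) * z :=
        star_left_conjugate_le_conjugate (OrderHomClass.mono j h) z
    _ = star (j b * z) * j s * (j b * z) := by
        simp only [map_mul, star_mul, hjb, mul_assoc]

theorem norm_le_one_of_star_mul_self_eq_one {V : B} (hV : star V * V = 1) : ‖V‖ ≤ 1 := by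
  obtain _ | _ := subsingleton_or_nontrivial B
  · simp [Subsingleton.elim V 0]
  · rw [← sq_le_one_iff₀ (norm_nonneg V), sq, ← CStarRing.norm_star_mul_self, hV,
      CStarRing.norm_one]

theorem exists_mem_quasiStates_apply_eq_compression (j : A →⋆ₙₐ[ℂ] B) {V : B} (hV : ‖V‖ ≤ 1)
    {g : WeakDual ℂ B} (hg : g ∈ quasiStates B) :
    ∃ ψ ∈ quasiStates A, ∀ a, ψ a = g (star V * j a * V) := by
  have hbound (a : A) : ‖g (star V * j a * V)‖ ≤ 1 * ‖a‖ := by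
    calc ‖g (star V * j a * V)‖ ≤ ‖star V * j a * V‖ := norm_apply_le_of_mem_quasiStates hg _
      _ ≤ ‖star V‖ * ‖j a‖ * ‖V‖ := norm_mul₃_le
      _ ≤ 1 * ‖a‖ * 1 := by
        gcongr
        · rwa [norm_star]
        · exact NonUnitalStarAlgHom.norm_apply_le j a
      _ = 1 * ‖a‖ := mul_one _
  let ψ : A →L[ℂ] ℂ := LinearMap.mkContinuous
    { toFun a := g (star V * j a * V)
      map_add' a b := by simp [mul_add, add_mul]
      map_smul' c a := by simp } 1 hbound
  refine ⟨StrongDual.toWeakDual ψ, ⟨fun a ↦ ?_, mem_closedBall_zero_iff.2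
    (LinearMap.mkContinuous_norm_le _ zero_le_one hbound)⟩, fun _ ↦ rfl⟩
  change 0 ≤ g (star V * j (star a * a) * V)
  simpa only [map_mul, map_star, star_mul, mul_assoc] using hg.1 (j a * V)

end Compression

section States

variable {B : Type*} [CStarAlgebra B]

/-- The states of a unital C⋆-algebra: the quasi-states `g` with `g 1 = 1`. -/
def states (B : Type*) [CStarAlgebra B] : Set (WeakDual ℂ B) :=
  {g ∈ quasiStates B | g 1 = 1}

theorem norm_add_algebraMap_I_mul_sq_le {a : B} (ha : IsSelfAdjoint a) (t : ℝ) :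
    ‖a + algebraMap ℂ B (t * Complex.I)‖ ^ 2 ≤ ‖a‖ ^ 2 + t ^ 2 := by
  obtain _ | _ := subsingleton_or_nontrivial B
  · rw [Subsingleton.elim (a + _) a]
    exact le_add_of_nonneg_right (sq_nonneg t)
  have hmul : star (a + algebraMap ℂ B (t * Complex.I)) * (a + algebraMap ℂ B (t * Complex.I)) =
      a * a + algebraMap ℂ B (t ^ 2 : ℝ) := by
    have hstar : star (algebraMap ℂ B (t * Complex.I)) = -algebraMap ℂ B (t * Complex.I) := by
      rw [← algebraMap_star_comm, ← map_neg]
      congr 1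
      simp
    have hsq : algebraMap ℂ B (t * Complex.I) * algebraMap ℂ B (t * Complex.I) =
        -algebraMap ℂ B (t ^ 2 : ℝ) := by
      rw [← map_mul, mul_mul_mul_comm, Complex.I_mul_I, ← map_neg]
      congr 1
      push_cast
      ring
    rw [star_add, ha.star_eq, hstar, ← sub_eq_add_neg,
      ← (Algebra.commute_algebraMap_right _ a).mul_self_sub_mul_self_eq', hsq, sub_neg_eq_add]
  calc ‖a + algebraMap ℂ B (t * Complex.I)‖ ^ 2 = ‖a * a + algebraMap ℂ B (t ^ 2 : ℝ)‖ := by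
        rw [sq, ← CStarRing.norm_star_mul_self, hmul]
    _ ≤ ‖a‖ * ‖a‖ + ‖algebraMap ℂ B (t ^ 2 : ℝ)‖ :=
        (norm_add_le _ _).trans (by gcongr; exact norm_mul_le a a)
    _ = ‖a‖ ^ 2 + t ^ 2 := by
        rw [norm_algebraMap', Complex.norm_real, Real.norm_of_nonneg (sq_nonneg t), sq ‖a‖]

theorem im_apply_eq_zero_of_norm_le_one {g : StrongDual ℂ B} (hg : ‖g‖ ≤ 1) (hg₁ : g 1 = 1)
    {a : B} (ha : IsSelfAdjoint a) : (g a).im = 0 := by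
  have hle (t : ℝ) : ((g a).im + t) ^ 2 ≤ ‖a‖ ^ 2 + t ^ 2 := by
    calc ((g a).im + t) ^ 2 = (g (a + algebraMap ℂ B (t * Complex.I))).im ^ 2 := by
          simp [Algebra.algebraMap_eq_smul_one, hg₁]
      _ ≤ ‖g (a + algebraMap ℂ B (t * Complex.I))‖ ^ 2 :=
          sq_le_sq' (neg_le_of_abs_le (Complex.abs_im_le_norm _)) (Complex.im_le_norm _)
      _ ≤ ‖a + algebraMap ℂ B (t * Complex.I)‖ ^ 2 := by
          gcongr
          exact (g.le_of_opNorm_le hg _).trans_eq (one_mul _)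
      _ ≤ ‖a‖ ^ 2 + t ^ 2 := norm_add_algebraMap_I_mul_sq_le ha t
  by_contra h
  have h₁ := hle (‖a‖ ^ 2 / (g a).im)
  have h₂ : (g a).im * (‖a‖ ^ 2 / (g a).im) = ‖a‖ ^ 2 := mul_div_cancel₀ _ h
  nlinarith [sq_pos_of_ne_zero h, sq_nonneg ‖a‖]

theorem re_apply_nonneg_of_norm_le_one [PartialOrder B] [StarOrderedRing B] {g : StrongDual ℂ B}
    (hg : ‖g‖ ≤ 1) (hg₁ : g 1 = 1) {a : B} (ha : 0 ≤ a) : 0 ≤ (g a).re := by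
  have hnorm : ‖algebraMap ℝ B ‖a‖ - a‖ ≤ ‖a‖ := by
    rw [CStarAlgebra.norm_le_iff_le_algebraMap _ (norm_nonneg a)
      (sub_nonneg.2 ha.isSelfAdjoint.le_algebraMap_norm_self)]
    exact sub_le_self _ ha
  have h : ‖a‖ - (g a).re ≤ ‖a‖ := by
    calc ‖a‖ - (g a).re = (g (algebraMap ℝ B ‖a‖ - a)).re := by
          rw [Algebra.algebraMap_eq_smul_one, ← Complex.coe_smul, map_sub, map_smul, hg₁]
          simp
      _ ≤ ‖g (algebraMap ℝ B ‖a‖ - a)‖ := Complex.re_le_norm _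
      _ ≤ ‖a‖ := (g.le_of_opNorm_le hg _).trans (by rwa [one_mul])
  linarith

theorem toWeakDual_mem_states {g : StrongDual ℂ B} (hg : ‖g‖ ≤ 1) (hg₁ : g 1 = 1) :
    StrongDual.toWeakDual g ∈ states B := by
  let := CStarAlgebra.spectralOrder B
  let := CStarAlgebra.spectralOrderedRing B
  exact ⟨⟨fun a ↦ Complex.nonneg_iff.2
    ⟨re_apply_nonneg_of_norm_le_one hg hg₁ (star_mul_self_nonneg a),
      (im_apply_eq_zero_of_norm_le_one hg hg₁ (.star_mul_self a)).symm⟩,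
    mem_closedBall_zero_iff.2 hg⟩, hg₁⟩

theorem norm_mk_one_span_singleton_of_not_isUnit {𝕜 R : Type*} [NormedField 𝕜] [NormedRing R]
    [NormedAlgebra 𝕜 R] [NormOneClass R] [CompleteSpace R] {x : R} (hx : ¬ IsUnit x) :
    ‖(Submodule.Quotient.mk 1 : R ⧸ Submodule.span 𝕜 {x})‖ = 1 := by
  refine le_antisymm ((Submodule.Quotient.norm_mk_le _ 1).trans_eq norm_one) ?_
  refine ((Metric.le_infDist ⟨0, zero_mem _⟩).2 fun m hm ↦ ?_).trans_eq
    (QuotientAddGroup.norm_mk (S := (Submodule.span 𝕜 {x}).toAddSubgroup) (1 : R)).symm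
  obtain ⟨k, rfl⟩ := Submodule.mem_span_singleton.1 hm
  by_contra! h
  have hk := isUnit_one_sub_of_norm_lt_one (dist_eq_norm (1 : R) _ ▸ h)
  rw [sub_sub_cancel, Algebra.smul_def, Commute.isUnit_mul_iff (Algebra.commutes _ _)] at hk
  exact hx hk.2

theorem exists_mem_states_apply_eq_of_mem_spectrum {y : B} {z : ℂ} (hz : z ∈ spectrum ℂ y) :
    ∃ g ∈ states B, g y = z := by
  obtain _ | _ := subsingleton_or_nontrivial B
  · simp at hz
  let M := Submodule.span ℂ {algebraMap ℂ B z - y}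
  obtain ⟨f, hf, hf₁⟩ := exists_dual_vector'' ℂ (Submodule.Quotient.mk 1 : B ⧸ M)
  rw [norm_mk_one_span_singleton_of_not_isUnit hz, RCLike.ofReal_one] at hf₁
  let g : StrongDual ℂ B := f ∘L M.mkQL
  have hg₁ : g 1 = 1 := hf₁
  have hg : ‖g‖ ≤ 1 := g.opNorm_le_bound zero_le_one fun b ↦
    (f.le_of_opNorm_le hf _).trans (by gcongr; exact Submodule.Quotient.norm_mk_le M b)
  have hgM : g (algebraMap ℂ B z - y) = 0 := by
    simp [g, M, (Submodule.Quotient.mk_eq_zero M).2 (Submodule.mem_span_singleton_self _)]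
  refine ⟨_, toWeakDual_mem_states hg hg₁, ?_⟩
  rw [map_sub, sub_eq_zero, Algebra.algebraMap_eq_smul_one, map_smul, hg₁, smul_eq_mul,
    mul_one] at hgM
  exact hgM.symm

theorem exists_mem_states_norm_apply_eq [Nontrivial B] (y : B) [IsStarNormal y] :
    ∃ g ∈ states B, ‖g y‖ = ‖y‖ := by
  obtain ⟨z, hz, hzy⟩ :=
    (IsometricContinuousFunctionalCalculus.isGreatest_norm_spectrum (𝕜 := ℂ) y).1
  obtain ⟨g, hg, rfl⟩ := exists_mem_states_apply_eq_of_mem_spectrum hz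
  exact ⟨g, hg, hzy⟩

theorem norm_le_of_forall_mem_states {y : B} [IsStarNormal y] {r : ℝ} (hr : 0 ≤ r)
    (h : ∀ g ∈ states B, ‖g y‖ ≤ r) : ‖y‖ ≤ r := by
  obtain _ | _ := subsingleton_or_nontrivial B
  · simpa [Subsingleton.elim y 0]
  obtain ⟨g, hg, hgy⟩ := exists_mem_states_norm_apply_eq y
  exact hgy ▸ h g hg

theorem norm_le_two_mul_of_forall_mem_states {y : B} {r : ℝ} (hr : 0 ≤ r)
    (h : ∀ g ∈ states B, ‖g y‖ ≤ r) : ‖y‖ ≤ 2 * r := by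
  have hre : ‖(realPart y : B)‖ ≤ r :=
    have := (realPart y).2.isStarNormal
    norm_le_of_forall_mem_states hr fun g hg ↦ by
      rw [apply_realPart_of_mem_quasiStates hg.1, Complex.norm_real]
      exact (Complex.abs_re_le_norm _).trans (h g hg)
  have him : ‖(imaginaryPart y : B)‖ ≤ r :=
    have := (imaginaryPart y).2.isStarNormal
    norm_le_of_forall_mem_states hr fun g hg ↦ by
      rw [apply_imaginaryPart_of_mem_quasiStates hg.1, Complex.norm_real]
      exact (Complex.abs_im_le_norm _).trans (h g hg)
  calc ‖y‖ = ‖(realPart y : B) + Complex.I • (imaginaryPart y : B)‖ := by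
        rw [realPart_add_I_smul_imaginaryPart]
    _ ≤ ‖(realPart y : B)‖ + ‖(imaginaryPart y : B)‖ :=
        (norm_add_le _ _).trans_eq (by rw [norm_smul, Complex.norm_I, one_mul])
    _ ≤ 2 * r := by linarith

end States

section Excision

variable {A B : Type*} [NonUnitalCStarAlgebra A] [CStarAlgebra B]

theorem setOf_forall_norm_sub_lt_mem_nhds (φ : WeakDual ℂ A) (F : Finset A) {δ : ℝ} (hδ : 0 < δ) :
    {ψ : WeakDual ℂ A | ∀ a ∈ F, ‖φ a - ψ a‖ < δ} ∈ 𝓝 φ := by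
  refine (Filter.eventually_all_finset F).2 fun a _ ↦ ?_
  have hcont : Continuous fun ψ : WeakDual ℂ A ↦ ‖φ a - ψ a‖ :=
    (continuous_const.sub (WeakDual.eval_continuous a)).norm
  exact hcont.continuousAt.eventually_lt_const (by simpa)

theorem norm_smul_one_sub_star_mul_map_mul_le [PartialOrder B] [StarOrderedRing B]
    {j : A →⋆ₙₐ[ℂ] B} {V : B} (hV : star V * V = 1) {s : A} {β : ℝ}
    (hVs : algebraMap ℝ B β ≤ star V * j s * V) {a : A} {w : ℂ} {r : ℝ} (hr : 0 ≤ r)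
    (h : ∀ ψ ∈ quasiStates A, β ≤ (ψ s).re → ‖w - ψ a‖ ≤ r) :
    ‖w • (1 : B) - star V * j a * V‖ ≤ 2 * r := by
  refine norm_le_two_mul_of_forall_mem_states hr fun g ⟨hg, hg₁⟩ ↦ ?_
  obtain ⟨ψ, hψ, hψg⟩ :=
    exists_mem_quasiStates_apply_eq_compression j (norm_le_one_of_star_mul_self_eq_one hV) hg
  have hψs : β ≤ (ψ s).re := by
    calc β = (g (algebraMap ℝ B β)).re := by
          rw [Algebra.algebraMap_eq_smul_one, ← Complex.coe_smul, map_smul, hg₁, smul_eq_mul,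
            mul_one, Complex.ofReal_re]
      _ ≤ (g (star V * j s * V)).re := re_apply_mono_of_mem_quasiStates hg hVs
      _ = (ψ s).re := by rw [hψg]
  simpa [hψg, hg₁] using h ψ hψ hψs

end Excision

theorem stmt19_general {A B : Type*} [NonUnitalCStarAlgebra A] [CStarAlgebra B] (hP1 : PropP1 B)
    (j : A →⋆ₙₐ[ℂ] B) {φ : A →L[ℂ] ℂ} (hφ : IsPureState φ)
    (hjfull : ∀ a : A, φ a ≠ 0 → IsFullIn (j a)) (F : Finset A) {ε : ℝ} (hε : 0 < ε) :
    ∃ V : B, star V * V = 1 ∧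
      V * star V ∈ closure {x : B | ∃ a₁ a₂ : A, ∃ y : B, x = j a₁ * y * j a₂} ∧
      ∀ a ∈ F, ‖φ a • (1 : B) - star V * j a * V‖ < ε := by
  let := CStarAlgebra.spectralOrder A
  let := CStarAlgebra.spectralOrderedRing A
  let := CStarAlgebra.spectralOrder B
  let := CStarAlgebra.spectralOrderedRing B
  obtain ⟨s, β, hs, hβ, hβs, hslice⟩ := hφ.exists_slice_subset
    (setOf_forall_norm_sub_lt_mem_nhds _ F (show 0 < ε / 3 by positivity))
  have hb : IsSelfAdjoint (sqrtCut β s) := isSelfAdjoint_sqrtCut β s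
  have hfull : IsFullIn (j (sqrtCut β s) * j (sqrtCut β s)) :=
    map_mul j _ _ ▸ hjfull _ (apply_sqrtCut_mul_self_ne_zero hφ.mem_quasiStates hβ.le hs hβs)
  obtain ⟨z, hV⟩ := hP1.exists_isometry hfull
  have hVs := algebraMap_le_star_mul_map_mul_of_smul_le hb (smul_sqrtCut_mul_self_le hβ.le hs) hV
  refine ⟨j (sqrtCut β s) * z, hV,
    subset_closure ⟨sqrtCut β s, sqrtCut β s, z * star z, ?_⟩, fun a ha ↦ ?_⟩
  · rw [star_mul, (hb.map j).star_eq]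
    simp only [mul_assoc]
  · have hle := norm_smul_one_sub_star_mul_map_mul_le hV hVs (show 0 ≤ ε / 3 by positivity)
      fun ψ hψ hψs ↦ (hslice ψ hψ hψs a ha).le
    exact hle.trans_lt (by linarith)

/-- excision of pure states vanishing on an ideal, through a full embedding
into a C*-algebra with property (P1). -/
theorem stmt19 {A : Type*} [NonUnitalCStarAlgebra A] [TopologicalSpace.SeparableSpace A]
    {B : Type*} [CStarAlgebra B] (hP1 : PropP1 B)
    (I : TwoSidedIdeal A) (hI : IsClosed (I : Set A))
    (j : A →⋆ₙₐ[ℂ] B) (hinj : Function.Injective j)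
    (hjfull : ∀ a : A, a ∉ I → IsFullIn (j a))
    (φ : A →L[ℂ] ℂ)
    (hpos : ∀ a : A, 0 ≤ φ (star a * a))
    (hnorm : ‖φ‖ = 1)
    -- purity: every positive functional dominated by φ is a scalar multiple of φ
    (hpure : ∀ ψ : A →L[ℂ] ℂ, (∀ a : A, 0 ≤ ψ (star a * a)) →
      (∀ a : A, 0 ≤ φ (star a * a) - ψ (star a * a)) → ∃ t : ℝ, ψ = (t : ℂ) • φ)
    (hvanish : ∀ a ∈ I, φ a = 0)
    (F : Finset A) (ε : ℝ) (hε : 0 < ε) :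
    ∃ V : B, star V * V = 1 ∧
      -- V V* lies in the hereditary subalgebra generated by j(A)
      V * star V ∈ closure {x : B | ∃ a₁ a₂ : A, ∃ y : B, x = j a₁ * y * j a₂} ∧
      ∀ a ∈ F, ‖φ a • (1 : B) - star V * j a * V‖ < ε :=
  stmt19_general hP1 j ⟨hpos, hnorm, hpure⟩ (fun a ha ↦ hjfull a (mt (hvanish a) ha)) F hε
end
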